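/- arXiv:1511.08942 — 12 statements merged into one kernel-verified Lean document; each statement's English description precedes it below -/
import Mathlib

section
/- Let q be a power of an odd prime and d ≥ 2. Let H be a nonempty finite collection of distinct affine hyperplanes in F_q^d (each hyperplane being a set of the form {x ∈ F_q^d : x·v = c} for some nonzero v ∈ F_q^d and c ∈ F_q), and let E = ⋃_{h ∈ H} h be their union. Then the complement satisfies |F_q^d \ E| ≤ q^{d+1}/|H|. -/
/-!
The proof is a second moment argument. Let `f x` be the number of hyperplanes of `H` through `x`
and `n = |H|`. A hyperplane has `q^(d-1)` points, so `∑ f = n q^(d-1)` and `f` has mean `n / q`.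
Two distinct hyperplanes share at most `q^(d-2)` points, so `∑ f² ≤ n² q^(d-2) + n q^(d-1)`, whence
`∑ (f - n / q)² ≤ n q^(d-1)`. Each point off the union has `f = 0` and contributes `(n / q)²`
to this sum; hence the number of such points is at most `q^(d+1) / n`.
-/

open Finset in
/-- All fibres of a surjective homomorphism of finite groups have the same size. -/
lemma card_mul_card_fiber {G M : Type*} [AddGroup G] [AddGroup M] [Fintype G] [Fintype M]
    [DecidableEq M] (f : G →+ M) (hf : Function.Surjective f) (b : M) :
    Fintype.card M * #{x | f x = b} = Fintype.card G := by
  have h := Finset.card_eq_sum_card_fiberwise (f := f) (s := (univ : Finset G))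
    (t := (univ : Finset M)) (fun _ _ => by simp)
  rw [Finset.sum_congr rfl (fun m _ =>
    AddMonoidHom.card_fiber_eq_of_mem_range f (hf m) (hf b))] at h
  simpa using h.symm

/-- The map `x ↦ x · v` as a group homomorphism. -/
def dotHom {F : Type} [Field F] {d : ℕ} (v : Fin d → F) : (Fin d → F) →+ F where
  toFun x := ∑ i, x i * v i
  map_zero' := by simp
  map_add' x y := by simp [add_mul, Finset.sum_add_distrib]

lemma dotHom_single {F : Type} [Field F] {d : ℕ} (v : Fin d → F) (i : Fin d) (s : F) :
    dotHom v (Pi.single i s) = s * v i := by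
  simp [dotHom, Pi.single_apply]

open Finset in
lemma card_hyperplane {F : Type} [Field F] [Fintype F] [DecidableEq F] {e : ℕ}
    (v : Fin (e + 2) → F) (hv : v ≠ 0) (c : F) :
    #{x | dotHom v x = c} = Fintype.card F ^ (e + 1) := by
  obtain ⟨i, hi⟩ := Function.ne_iff.mp hv
  have hi : v i ≠ 0 := hi
  have h := card_mul_card_fiber (dotHom v)
    (fun a => ⟨Pi.single i (a / v i), by rw [dotHom_single, div_mul_cancel₀ _ hi]⟩) c
  apply Nat.eq_of_mul_eq_mul_left (Fintype.card_pos (α := F))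
  rw [h]
  simp [pow_succ']

open Finset in
/-- If the normals are proportional, the hyperplanes are parallel, hence disjoint; otherwise
`x ↦ (x · v, x · w)` is onto `F × F` and the intersection is one of its fibres. -/
lemma card_inter_hyperplane {F : Type} [Field F] [Fintype F] [DecidableEq F] {e : ℕ}
    (v w : Fin (e + 2) → F) (hv : v ≠ 0) (hw : w ≠ 0) (c c' : F)
    (hne : {x | dotHom v x = c} ≠ {x | dotHom w x = c'}) :
    #{x | dotHom v x = c ∧ dotHom w x = c'} ≤ Fintype.card F ^ e := by
  obtain ⟨i, hi⟩ := Function.ne_iff.mp hv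
  have hi : v i ≠ 0 := hi
  by_cases hu : ∀ j, w j = w i / v i * v j
  · have hwv : ∀ x, dotHom w x = w i / v i * dotHom v x := by
      intro x
      simp only [dotHom, AddMonoidHom.coe_mk, ZeroHom.coe_mk, Finset.mul_sum]
      refine Finset.sum_congr rfl fun j _ => ?_
      conv_lhs => rw [hu j]
      ring
    have hl : w i / v i ≠ 0 := by
      intro h0
      apply hw
      funext j
      rw [hu j, h0]
      simp
    rw [Finset.card_eq_zero.mpr]
    · exact Nat.zero_le _
    · rw [Finset.filter_eq_empty_iff]
      rintro x - ⟨h1, h2⟩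
      apply hne
      ext y
      rw [hwv, h1] at h2
      simp only [Set.mem_ofPred_eq, hwv, ← h2]
      exact (mul_right_inj' hl).symm
  · push Not at hu
    obtain ⟨j, hj⟩ := hu
    have hD : v i * w j - v j * w i ≠ 0 := by
      intro h0
      apply hj
      field_simp
      linear_combination h0
    have hs : Function.Surjective ((dotHom v).prod (dotHom w)) := by
      rintro ⟨a, b⟩
      -- Cramer's rule in the coordinates `i` and `j`.
      refine ⟨Pi.single i ((a * w j - b * v j) / (v i * w j - v j * w i)) +
        Pi.single j ((b * v i - a * w i) / (v i * w j - v j * w i)), ?_⟩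
      simp only [AddMonoidHom.prod_apply, map_add, dotHom_single, Prod.mk_add_mk, Prod.mk.injEq]
      constructor
      · rw [div_mul_eq_mul_div, div_mul_eq_mul_div, ← add_div, div_eq_iff hD]
        ring
      · rw [div_mul_eq_mul_div, div_mul_eq_mul_div, ← add_div, div_eq_iff hD]
        ring
    have h := card_mul_card_fiber _ hs (c, c')
    simp only [AddMonoidHom.prod_apply, Prod.mk.injEq] at h
    apply le_of_eq
    apply Nat.eq_of_mul_eq_mul_left (Fintype.card_pos (α := F × F))
    rw [h]
    simp only [Fintype.card_pi, prod_const, card_univ, Fintype.card_fin, Fintype.card_prod]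
    ring

open Finset in
/-- The second moment computation, for an abstract family of sets with the intersection sizes
of hyperplanes. -/
lemma second_moment_bound {X : Type*} [Fintype X] (H : Finset (Set X)) (hH : H.Nonempty)
    (q : ℝ) (hq : 0 < q) (e : ℕ) (hX : (Fintype.card X : ℝ) = q ^ (e + 2))
    (h1 : ∀ h ∈ H, (Nat.card h : ℝ) = q ^ (e + 1))
    (h2 : ∀ h ∈ H, ∀ h' ∈ H, h ≠ h' → (Nat.card (h ∩ h' : Set X) : ℝ) ≤ q ^ e) :
    (Nat.card ((⋃ h ∈ H, h)ᶜ : Set X) : ℝ) ≤ q ^ (e + 3) / #H := by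
  classical
  have hcard : ∀ s : Set X, (Nat.card s : ℝ) = ∑ x, if x ∈ s then (1 : ℝ) else 0 := by
    intro s
    rw [Nat.card_eq_fintype_card, Fintype.card_subtype]
    simp
  have hn : (0 : ℝ) < #H := by exact_mod_cast hH.card_pos
  set n : ℝ := (#H : ℝ) with hndef
  set f : X → ℝ := fun x => ∑ h ∈ H, if x ∈ h then (1 : ℝ) else 0 with hf
  have hS1 : ∑ x, f x = n * q ^ (e + 1) := by
    rw [hf, Finset.sum_comm, Finset.sum_congr rfl (fun h hh => (hcard h).symm.trans (h1 h hh))]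
    simp [hndef]
  have hS2 : ∑ x, f x ^ 2 ≤ n ^ 2 * q ^ e + n * q ^ (e + 1) := by
    calc ∑ x, f x ^ 2 = ∑ h ∈ H, ∑ h' ∈ H, (Nat.card (h ∩ h' : Set X) : ℝ) := by
          simp only [hf, sq, Finset.sum_mul_sum]
          rw [Finset.sum_comm]
          refine Finset.sum_congr rfl fun h _ => ?_
          rw [Finset.sum_comm]
          refine Finset.sum_congr rfl fun h' _ => ?_
          rw [hcard]
          refine Finset.sum_congr rfl fun x _ => ?_
          by_cases ha : x ∈ h <;> by_cases hb : x ∈ h' <;> simp [ha, hb]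
      _ ≤ ∑ h ∈ H, ∑ h' ∈ H, (q ^ e + if h = h' then q ^ (e + 1) else 0) := by
          refine Finset.sum_le_sum fun h hh => Finset.sum_le_sum fun h' hh' => ?_
          by_cases hc : h = h'
          · subst hc
            rw [Set.inter_self, h1 h hh, if_pos rfl]
            linarith [pow_pos hq e]
          · rw [if_neg hc, add_zero]
            exact h2 h hh h' hh' hc
      _ = n ^ 2 * q ^ e + n * q ^ (e + 1) := by
          simp only [Finset.sum_add_distrib, Finset.sum_const, nsmul_eq_mul, Finset.sum_ite_eq]
          rw [Finset.sum_congr rfl (fun h hh => if_pos hh)]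
          simp only [Finset.sum_const, nsmul_eq_mul, ← hndef]
          ring
  -- The centred second moment `∑ (f - n / q)²`, with the denominator `q` cleared.
  have hV : ∑ x, (q * f x - n) ^ 2 ≤ n * q ^ (e + 3) := by
    have : ∑ x, (q * f x - n) ^ 2
        = q ^ 2 * ∑ x, f x ^ 2 - 2 * q * n * ∑ x, f x + Fintype.card X * n ^ 2 := by
      rw [Finset.mul_sum, Finset.mul_sum, ← Finset.sum_sub_distrib, ← nsmul_eq_mul,
        ← Finset.card_univ, ← Finset.sum_const, ← Finset.sum_add_distrib]
      exact Finset.sum_congr rfl fun x _ => by ring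
    rw [this, hS1, hX]
    have := mul_le_mul_of_nonneg_left hS2 (sq_nonneg q)
    calc _ ≤ q ^ 2 * (n ^ 2 * q ^ e + n * q ^ (e + 1)) - 2 * q * n * (n * q ^ (e + 1))
          + q ^ (e + 2) * n ^ 2 := by gcongr
      _ = _ := by ring
  have hL : (Nat.card ((⋃ h ∈ H, h)ᶜ : Set X) : ℝ) * n ^ 2 ≤ ∑ x, (q * f x - n) ^ 2 := by
    rw [hcard, Finset.sum_mul]
    refine Finset.sum_le_sum fun x _ => ?_
    split_ifs with hx
    · have : f x = 0 := by
        refine Finset.sum_eq_zero fun h hh => if_neg fun hxh => hx ?_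
        exact Set.mem_biUnion hh hxh
      rw [this]
      apply le_of_eq
      ring
    · rw [zero_mul]
      positivity
  rw [le_div_iff₀ hn]
  refine le_of_mul_le_mul_right ?_ hn
  linarith

/-- Let `q` be a power of an odd prime and `d ≥ 2`. Let `H` be a nonempty
finite collection of distinct affine hyperplanes in `F_q^d`, and `E` their union. Then
`|F_q^d \ E| ≤ q^(d+1) / |H|`. -/
theorem complement_of_hyperplane_union_small
    (q d : ℕ) (hq : ∃ p n : ℕ, p.Prime ∧ Odd p ∧ 0 < n ∧ q = p ^ n) (hd : 2 ≤ d)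
    (F : Type) [Field F] [Fintype F] (hcard : Fintype.card F = q)
    (H : Finset (Set (Fin d → F))) (hH : H.Nonempty)
    (hhyp : ∀ h ∈ H, ∃ (v : Fin d → F) (c : F),
      v ≠ 0 ∧ h = {x : Fin d → F | ∑ i, x i * v i = c}) :
    (Nat.card ((⋃ h ∈ H, h)ᶜ : Set (Fin d → F)) : ℝ) ≤ (q : ℝ) ^ (d + 1) / H.card := by
  classical
  obtain ⟨e, rfl⟩ := Nat.exists_eq_add_of_le' hd
  have hq0 : (0 : ℝ) < q := by
    rw [← hcard]
    exact_mod_cast Fintype.card_pos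
  refine second_moment_bound H hH q hq0 e (by simp [hcard]) ?_ ?_
  · intro h hh
    obtain ⟨v, c, hv, rfl⟩ := hhyp h hh
    have := card_hyperplane v hv c
    rw [hcard] at this
    rw [Nat.card_eq_fintype_card, Fintype.card_subtype]
    exact_mod_cast this
  · intro h hh h' hh' hne
    obtain ⟨v, c, hv, rfl⟩ := hhyp h hh
    obtain ⟨w, c', hw, rfl⟩ := hhyp h' hh'
    have := card_inter_hyperplane v w hv hw c c' hne
    rw [hcard] at this
    rw [Nat.card_eq_fintype_card, Fintype.card_subtype]
    exact_mod_cast this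
end

section
/- Let q be a power of an odd prime and d ≥ 2. Let H be a nonempty finite collection of distinct affine hyperplanes in F_q^d (each hyperplane being a set of the form {x ∈ F_q^d : x·v = c} for some nonzero v ∈ F_q^d and c ∈ F_q), and let E = ⋃_{h ∈ H} h be their union. Then |E| ≥ q^d·|H|/(q + |H|). -/
/-! The bound is a second-moment estimate. Let `f x` be the number of hyperplanes of `H` through `x`
and let `E`, the union, be the support of `f`. By Cauchy–Schwarz `(∑ f)² ≤ |E| ∑ f²`. Here
`∑ f = |H| q^(d-1)`, since each hyperplane has `q^(d-1)` points (`hyperplane_card`), and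
`∑ f²` is the sum of `|h ∩ h'|` over pairs in `H`, where `|h ∩ h'| ≤ q^(d-2)` for `h ≠ h'`
(`hyperplane_inter_card`). The passage from these two facts to the bound is `second_moment`.

Both counts come from translating along a line: `F^d` is the bijective image of `h × F` under
`(x, t) ↦ x + t u` with `u` transverse to `h`, and if `w` is a direction of `h` transverse to `h'`
then `(x, t) ↦ x + t w` maps `(h ∩ h') × F` injectively into `h`. -/

/-- If finitely many sets of size `k` have pairwise intersections of size at most `k / q`, then
their union has size at least `q k N / (q + N)`, where `N` is the number of sets. -/
theorem second_moment {ι α : Type*} [DecidableEq ι] [DecidableEq α] (H : Finset ι)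
    (A : ι → Finset α) (q k : ℕ) (hk : 0 < k) (hH : H.Nonempty)
    (hA : ∀ h ∈ H, (A h).card = k)
    (hAA : ∀ h ∈ H, ∀ h' ∈ H, h ≠ h' → (A h ∩ A h').card * q ≤ k) :
    q * k * H.card ≤ (H.biUnion A).card * (q + H.card) := by
  set E := H.biUnion A with hE
  have hsub : ∀ h ∈ H, A h ⊆ E := fun h hh => Finset.subset_biUnion_of_mem A hh
  have h1 : ∑ x ∈ E, (∑ h ∈ H, if x ∈ A h then 1 else 0) = H.card * k := by
    rw [Finset.sum_comm, ← smul_eq_mul, ← Finset.sum_const]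
    refine Finset.sum_congr rfl fun h hh => ?_
    rw [← Finset.card_filter, Finset.filter_mem_eq_inter,
      Finset.inter_eq_right.2 (hsub h hh), hA h hh]
  have h2 : ∑ x ∈ E, (∑ h ∈ H, if x ∈ A h then 1 else 0) ^ 2
      = ∑ h ∈ H, ∑ h' ∈ H, (A h ∩ A h').card := by
    simp_rw [sq, Finset.sum_mul_sum]
    rw [Finset.sum_comm]
    refine Finset.sum_congr rfl fun h hh => ?_
    rw [Finset.sum_comm]
    refine Finset.sum_congr rfl fun h' hh' => ?_
    have : ∀ x, ((if x ∈ A h then 1 else 0) * (if x ∈ A h' then 1 else 0) : ℕ)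
        = if x ∈ A h ∩ A h' then 1 else 0 := by
      intro x
      by_cases hx : x ∈ A h <;> by_cases hx' : x ∈ A h' <;> simp [hx, hx']
    simp_rw [this]
    rw [← Finset.card_filter, Finset.filter_mem_eq_inter, Finset.inter_eq_right.2]
    exact Finset.inter_subset_left.trans (hsub h hh)
  have h3 : (∑ h ∈ H, ∑ h' ∈ H, (A h ∩ A h').card) * q ≤ H.card * (k * (q + H.card)) := by
    rw [Finset.sum_mul, ← smul_eq_mul (a := H.card), ← Finset.sum_const]
    refine Finset.sum_le_sum fun h hh => ?_
    rw [Finset.sum_mul]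
    calc ∑ h' ∈ H, (A h ∩ A h').card * q
        ≤ ∑ h' ∈ H, ((if h = h' then k * q else 0) + k) := by
          refine Finset.sum_le_sum fun h' hh' => ?_
          split_ifs with he
          · subst he
            simp [hA h hh]
          · simpa using hAA h hh h' hh' he
      _ = k * (q + H.card) := by
          rw [Finset.sum_add_distrib, Finset.sum_ite_eq]
          simp [hh]
          ring
  have h4 := sq_sum_le_card_mul_sum_sq (s := E)
    (f := fun x => ∑ h ∈ H, if x ∈ A h then 1 else 0)
  rw [h1, h2] at h4
  have hN : 0 < H.card * k := Nat.mul_pos hH.card_pos hk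
  refine Nat.le_of_mul_le_mul_left ?_ hN
  calc H.card * k * (q * k * H.card) = (H.card * k) ^ 2 * q := by ring
    _ ≤ E.card * (∑ h ∈ H, ∑ h' ∈ H, (A h ∩ A h').card) * q := Nat.mul_le_mul_right _ h4
    _ = E.card * ((∑ h ∈ H, ∑ h' ∈ H, (A h ∩ A h').card) * q) := by ring
    _ ≤ E.card * (H.card * (k * (q + H.card))) := Nat.mul_le_mul_left _ h3
    _ = H.card * k * (E.card * (q + H.card)) := by ring

theorem hyperplane_card {d : ℕ} {F : Type} [Field F] [Fintype F] {v : Fin d → F} (hv : v ≠ 0)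
    (c : F) : Nat.card {x : Fin d → F | x ⬝ᵥ v = c} * Fintype.card F = Fintype.card F ^ d := by
  obtain ⟨i, hi⟩ : ∃ i, v i ≠ 0 := Function.ne_iff.1 hv
  have hu : (Pi.single i (v i)⁻¹ : Fin d → F) ⬝ᵥ v = 1 := by simp [hi]
  generalize (Pi.single i (v i)⁻¹ : Fin d → F) = u at hu
  let e : {x : Fin d → F | x ⬝ᵥ v = c} × F ≃ (Fin d → F) :=
    { toFun := fun p => p.1.1 + p.2 • u
      invFun := fun y => (⟨y - (y ⬝ᵥ v - c) • u, by simp [hu]⟩, y ⬝ᵥ v - c)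
      left_inv := by
        rintro ⟨⟨x, hx⟩, t⟩
        have hx : x ⬝ᵥ v = c := hx
        simp [hu, hx]
      right_inv := fun y => by simp }
  have := Nat.card_congr e
  rw [Nat.card_prod] at this
  simpa using this

/-- A hyperplane meets another set `{x | x ⬝ᵥ v' = c'}` not containing it in at most `1 / q`
of its points. -/
theorem hyperplane_inter_card {d : ℕ} {F : Type} [Field F] [Fintype F] {v v' : Fin d → F}
    {c c' : F} (hne : ¬ {x : Fin d → F | x ⬝ᵥ v = c} ⊆ {x | x ⬝ᵥ v' = c'}) :
    Nat.card ({x : Fin d → F | x ⬝ᵥ v = c} ∩ {x | x ⬝ᵥ v' = c'} : Set (Fin d → F))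
      * Fintype.card F ≤ Nat.card {x : Fin d → F | x ⬝ᵥ v = c} := by
  rcases Set.eq_empty_or_nonempty
    ({x : Fin d → F | x ⬝ᵥ v = c} ∩ {x | x ⬝ᵥ v' = c'}) with h0 | ⟨x₀, hx₀, hx₀'⟩
  · rw [h0]; simp
  obtain ⟨y, hy, hy'⟩ := Set.not_subset.1 hne
  simp only [Set.mem_ofPred_eq] at hx₀ hx₀' hy hy'
  have hw : (y - x₀) ⬝ᵥ v = 0 := by simp [hy, hx₀]
  have hw' : (y - x₀) ⬝ᵥ v' ≠ 0 := by simpa [hx₀', sub_eq_zero] using hy'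
  generalize y - x₀ = w at hw hw'
  rw [← Nat.card_eq_fintype_card, ← Nat.card_prod]
  refine Nat.card_le_card_of_injective
    (fun p => ⟨p.1.1 + p.2 • w, ?_⟩) ?_
  · have := p.1.2.1
    simp only [Set.mem_ofPred_eq] at this ⊢
    simp [hw, this]
  · rintro ⟨⟨x, hx, hx'⟩, s⟩ ⟨⟨z, hz, hz'⟩, t⟩ h
    simp only [Set.mem_ofPred_eq] at hx' hz'
    have h : x + s • w = z + t • w := congrArg Subtype.val h
    -- Pairing with `v'` recovers the parameter along `w`.
    have hst : s = t := by
      have := congrArg (· ⬝ᵥ v') h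
      simpa [hx', hz', hw'] using this
    subst hst
    obtain rfl : x = z := by simpa using h
    rfl

theorem hyperplane_union_large
    (q d : ℕ) (hq : ∃ p n : ℕ, p.Prime ∧ Odd p ∧ 0 < n ∧ q = p ^ n) (hd : 2 ≤ d)
    (F : Type) [Field F] [Fintype F] (hcard : Fintype.card F = q)
    (H : Finset (Set (Fin d → F))) (hH : H.Nonempty)
    (hhyp : ∀ h ∈ H, ∃ (v : Fin d → F) (c : F),
      v ≠ 0 ∧ h = {x : Fin d → F | ∑ i, x i * v i = c}) :
    (Nat.card (⋃ h ∈ H, h : Set (Fin d → F)) : ℝ) ≥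
      (q : ℝ) ^ d * H.card / ((q : ℝ) + H.card) := by
  classical
  have hq0 : 0 < q := hcard ▸ Fintype.card_pos
  have hc : ∀ h ∈ H, Nat.card h * q = q ^ d := by
    intro h hh
    obtain ⟨v, c, hv, rfl⟩ := hhyp h hh
    rw [← hcard]
    exact hyperplane_card hv c
  obtain ⟨h₀, hh₀⟩ := hH
  have hk : ∀ h ∈ H, Nat.card h = Nat.card h₀ := fun h hh =>
    Nat.eq_of_mul_eq_mul_right hq0 ((hc h hh).trans (hc h₀ hh₀).symm)
  have hpos : 0 < Nat.card h₀ :=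
    Nat.pos_of_mul_pos_right (hc h₀ hh₀ ▸ pow_pos hq0 d : 0 < Nat.card h₀ * q)
  have key := second_moment H (fun h => h.toFinset) q (Nat.card h₀) hpos ⟨h₀, hh₀⟩
    (fun h hh => by rw [← hk h hh, Set.toFinset_card, Nat.card_eq_fintype_card])
    (fun h hh h' hh' hne => by
      -- Hyperplanes have equally many points, so distinct ones are not nested.
      have hns : ¬ h ⊆ h' := fun hs => hne <|
        Set.eq_of_subset_of_ncard_le hs (le_of_eq ((hk h' hh').trans (hk h hh).symm))
      rw [← Set.toFinset_inter, Set.toFinset_card, ← Nat.card_eq_fintype_card, ← hk h hh]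
      obtain ⟨v, c, hv, rfl⟩ := hhyp h hh
      obtain ⟨v', c', hv', rfl⟩ := hhyp h' hh'
      rw [← hcard]
      exact hyperplane_inter_card hns)
  have hU : Nat.card (⋃ h ∈ H, h : Set (Fin d → F)) = (H.biUnion fun h => h.toFinset).card := by
    rw [Nat.card_eq_fintype_card, ← Set.toFinset_card]
    congr 1
    ext x
    simp
  rw [mul_comm q, hc h₀ hh₀, ← hU] at key
  rw [ge_iff_le, div_le_iff₀ (by positivity)]
  exact_mod_cast key
end

section
/- Let q be a power of an odd prime and d ≥ 2. If A, B ⊆ F_q^d are disjoint sets with |A|²·|B| > 4·q^{d+2}, then there exist x, y ∈ A and z ∈ B such that the triple (x, y, z) forms a right angle, i.e., x, y, z are distinct and (x−y)·(z−y) = 0. -/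
/-!
For `y ∈ A` and `z ∈ B` let `H (y, z)` be the hyperplane `{x | (x - y) · (z - y) = 0}`, a genuine
hyperplane because `A` and `B` are disjoint, and let `g_p = q * 1_{H p} - 1`, a function of mean
zero. Two hyperplanes with non-parallel normals are independent, so `∑ x, g_p x * g_p' x = 0`; if
they are parallel and disjoint the sum is negative, and if they coincide it is at most
`q ^ (d + 1)`.

Suppose there is no right angle. If `H (y, z) = H (y', z')`, then `y'` lies on `H (y, z)`, so
`(y', y, z)` would be a right angle unless `y' = y`; hence `z'` lies on the line through `y` and
`z`, and each pair `(y, z)` interacts with at most `q` others. The second moment of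
`∑ p ∈ A ×ˢ B, g_p` over the whole space is therefore at most `|A| |B| q ^ (d + 2)`. On the other
hand a point `x ∈ A` lies on `H (y, z)` only if `y = x`, so the sum of this function over `A` is
exactly `q |A| |B| - |A|² |B|`. Cauchy–Schwarz over `A` gives
`(|A| - q)² |B| ≤ q ^ (d + 2)`, which contradicts `|A|² |B| > 4 q ^ (d + 2)`, since the latter
together with `|B| ≤ q ^ d` forces `|A| > 2 q`.
-/

lemma card_fiber_mul_card {G H : Type} [AddGroup G] [Fintype G] [AddGroup H] [Fintype H]
    [DecidableEq H] (φ : G →+ H) (hφ : Function.Surjective φ) (c : H) :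
    (Finset.univ.filter fun x => φ x = c).card * Fintype.card H = Fintype.card G := by
  have h1 := Finset.card_eq_sum_card_fiberwise (f := φ) (s := Finset.univ) (t := Finset.univ)
    (fun _ _ => by simp)
  rw [Finset.card_univ] at h1
  rw [h1, Finset.sum_congr rfl (fun b _ =>
    AddMonoidHom.card_fiber_eq_of_mem_range φ (hφ b) (hφ c))]
  simp [mul_comm]

section
variable {F : Type} [Field F] [Fintype F] [DecidableEq F] {d : ℕ}

lemma card_hyperplane_s2 (w : Fin d → F) (hw : w ≠ 0) (c : F) :
    (Finset.univ.filter fun x : Fin d → F => x ⬝ᵥ w = c).card * Fintype.card F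
      = Fintype.card F ^ d := by
  obtain ⟨i, hi⟩ := Function.ne_iff.mp hw
  have hi : w i ≠ 0 := hi
  have := card_fiber_mul_card (G := Fin d → F) (H := F)
    (AddMonoidHom.mk' (fun x => x ⬝ᵥ w) (fun x y => add_dotProduct x y w))
    (fun a => ⟨Pi.single i (a / w i), by simp [hi]⟩) c
  simpa using this

/-- Two hyperplanes with non-parallel normals meet in `q ^ (d - 2)` points. -/
lemma card_inter_hyperplanes (w w' : Fin d → F) (hw : w ≠ 0) (hpar : ∀ t : F, w' ≠ t • w)
    (c c' : F) :
    (Finset.univ.filter fun x : Fin d → F => x ⬝ᵥ w = c ∧ x ⬝ᵥ w' = c').card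
      * Fintype.card F ^ 2 = Fintype.card F ^ d := by
  obtain ⟨i, hi⟩ := Function.ne_iff.mp hw
  have hi : w i ≠ 0 := hi
  obtain ⟨j, hj⟩ : ∃ j, w i * w' j - w j * w' i ≠ 0 := by
    by_contra! h
    refine hpar (w' i / w i) (funext fun j => ?_)
    simp only [Pi.smul_apply, smul_eq_mul]
    field_simp
    linear_combination h j
  have := card_fiber_mul_card (G := Fin d → F) (H := F × F)
    (AddMonoidHom.mk' (fun x => (x ⬝ᵥ w, x ⬝ᵥ w'))
      (fun x y => by simp [add_dotProduct]))
    (fun a => ⟨Pi.single i ((a.1 * w' j - a.2 * w j) / (w i * w' j - w j * w' i))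
        + Pi.single j ((a.2 * w i - a.1 * w' i) / (w i * w' j - w j * w' i)), by
      ext
      · simp only [AddMonoidHom.mk'_apply, add_dotProduct, single_dotProduct]
        rw [div_mul_eq_mul_div, div_mul_eq_mul_div, ← add_div, div_eq_iff hj]; ring
      · simp only [AddMonoidHom.mk'_apply, add_dotProduct, single_dotProduct]
        rw [div_mul_eq_mul_div, div_mul_eq_mul_div, ← add_div, div_eq_iff hj]; ring⟩) (c, c')
  simpa [sq, Prod.ext_iff] using this

/-- The function `q * 1_H - 1`, where `H` is the hyperplane through `p.1` with normal
`p.2 - p.1`. -/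
def balanced (p : (Fin d → F) × (Fin d → F)) (x : Fin d → F) : ℤ :=
  (Fintype.card F : ℤ) * (if x ⬝ᵥ (p.2 - p.1) = p.1 ⬝ᵥ (p.2 - p.1) then 1 else 0) - 1

lemma sum_balanced_mul (p p' : (Fin d → F) × (Fin d → F)) (hp : p.2 - p.1 ≠ 0)
    (hp' : p'.2 - p'.1 ≠ 0) :
    ∑ x, balanced p x * balanced p' x =
      (Fintype.card F : ℤ) ^ 2 * (Finset.univ.filter fun x : Fin d → F =>
        x ⬝ᵥ (p.2 - p.1) = p.1 ⬝ᵥ (p.2 - p.1) ∧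
          x ⬝ᵥ (p'.2 - p'.1) = p'.1 ⬝ᵥ (p'.2 - p'.1)).card
      - (Fintype.card F : ℤ) ^ d := by
  have h1 := card_hyperplane_s2 _ hp (p.1 ⬝ᵥ (p.2 - p.1))
  have h2 := card_hyperplane_s2 _ hp' (p'.1 ⬝ᵥ (p'.2 - p'.1))
  zify at h1 h2
  have e : ∀ x, balanced p x * balanced p' x =
      (Fintype.card F : ℤ) ^ 2 * (if x ⬝ᵥ (p.2 - p.1) = p.1 ⬝ᵥ (p.2 - p.1) ∧
          x ⬝ᵥ (p'.2 - p'.1) = p'.1 ⬝ᵥ (p'.2 - p'.1) then 1 else 0)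
      - (Fintype.card F : ℤ) * (if x ⬝ᵥ (p.2 - p.1) = p.1 ⬝ᵥ (p.2 - p.1) then 1 else 0)
      - (Fintype.card F : ℤ) * (if x ⬝ᵥ (p'.2 - p'.1) = p'.1 ⬝ᵥ (p'.2 - p'.1) then 1 else 0)
      + 1 := by
    intro x
    unfold balanced
    split_ifs <;> first | tauto | ring
  rw [Finset.sum_congr rfl fun x _ => e x]
  simp only [Finset.sum_add_distrib, Finset.sum_sub_distrib, ← Finset.mul_sum, Finset.sum_boole]
  simp only [Finset.sum_const, Finset.card_univ, Fintype.card_pi, Finset.prod_const,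
    Fintype.card_fin, nsmul_eq_mul, mul_one, Nat.cast_pow]
  linarith

/-- Pairs whose hyperplanes coincide must, in the absence of right angles, share their vertex and
lie on a common line; all other pairs are non-positively correlated. -/
lemma sum_balanced_mul_le (p p' : (Fin d → F) × (Fin d → F)) (hp : p.2 - p.1 ≠ 0)
    (hp' : p'.2 - p'.1 ≠ 0)
    (hno : p'.1 ⬝ᵥ (p.2 - p.1) = p.1 ⬝ᵥ (p.2 - p.1) → p'.1 = p.1) :
    ∑ x, balanced p x * balanced p' x ≤
      if p' ∈ Finset.univ.image (fun t : F => (p.1, p.1 + t • (p.2 - p.1)))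
        then (Fintype.card F : ℤ) ^ (d + 1) else 0 := by
  rw [sum_balanced_mul p p' hp hp']
  by_cases hpar : ∀ t : F, p'.2 - p'.1 ≠ t • (p.2 - p.1)
  · have := card_inter_hyperplanes _ _ hp hpar (p.1 ⬝ᵥ (p.2 - p.1)) (p'.1 ⬝ᵥ (p'.2 - p'.1))
    zify at this
    rw [mul_comm, this, sub_self]
    split_ifs <;> positivity
  push Not at hpar
  obtain ⟨t, ht⟩ := hpar
  have ht0 : t ≠ 0 := by rintro rfl; simp at ht; exact hp' ht
  by_cases hy : p'.1 = p.1
  · rw [if_pos]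
    · have h1 := card_hyperplane_s2 _ hp (p.1 ⬝ᵥ (p.2 - p.1))
      have h2 : (Finset.univ.filter fun x : Fin d → F =>
          x ⬝ᵥ (p.2 - p.1) = p.1 ⬝ᵥ (p.2 - p.1) ∧
          x ⬝ᵥ (p'.2 - p'.1) = p'.1 ⬝ᵥ (p'.2 - p'.1)).card ≤ _ :=
        Finset.card_le_card (Finset.monotone_filter_right _ (fun x _ hx => hx.1))
      have h3 := Nat.mul_le_mul_left (Fintype.card F ^ 2) h2
      have h4 : Fintype.card F ^ 2 * (Finset.univ.filter fun x : Fin d → F =>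
          x ⬝ᵥ (p.2 - p.1) = p.1 ⬝ᵥ (p.2 - p.1)).card = Fintype.card F ^ (d + 1) := by
        rw [pow_succ (Fintype.card F) d, ← h1]; ring
      rw [h4] at h3
      zify at h3
      have : (0 : ℤ) ≤ (Fintype.card F : ℤ) ^ d := by positivity
      linarith
    · simp only [Finset.mem_image, Finset.mem_univ, true_and]
      refine ⟨t, Prod.ext hy.symm ?_⟩
      simp only
      rw [← ht, hy]; abel
  · have h0 : (Finset.univ.filter fun x : Fin d → F =>
        x ⬝ᵥ (p.2 - p.1) = p.1 ⬝ᵥ (p.2 - p.1) ∧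
          x ⬝ᵥ (p'.2 - p'.1) = p'.1 ⬝ᵥ (p'.2 - p'.1)) = ∅ := by
      refine Finset.filter_eq_empty_iff.mpr fun x _ hx => hy (hno ?_)
      obtain ⟨hx1, hx2⟩ := hx
      rw [ht, dotProduct_smul, dotProduct_smul] at hx2
      exact (mul_left_cancel₀ ht0 hx2).symm.trans hx1
    rw [h0]
    have : (0 : ℤ) ≤ (Fintype.card F : ℤ) ^ d := by positivity
    split_ifs
    · have : (0 : ℤ) ≤ (Fintype.card F : ℤ) ^ (d + 1) := by positivity
      simp; linarith
    · simp

/-- The second moment bound over the whole space. -/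
lemma sum_sq_le (T : Finset ((Fin d → F) × (Fin d → F))) (hT : ∀ p ∈ T, p.2 - p.1 ≠ 0)
    (hno : ∀ p ∈ T, ∀ p' ∈ T, p'.1 ⬝ᵥ (p.2 - p.1) = p.1 ⬝ᵥ (p.2 - p.1) → p'.1 = p.1) :
    ∑ x, (∑ p ∈ T, balanced p x) ^ 2 ≤ (T.card : ℤ) * (Fintype.card F : ℤ) ^ (d + 2) := by
  have e : ∑ x, (∑ p ∈ T, balanced p x) ^ 2
      = ∑ p ∈ T, ∑ p' ∈ T, ∑ x, balanced p x * balanced p' x := by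
    simp only [sq, Finset.sum_mul_sum]
    rw [Finset.sum_comm]
    exact Finset.sum_congr rfl fun p _ => Finset.sum_comm
  rw [e, ← nsmul_eq_mul]
  refine Finset.sum_le_card_nsmul _ _ _ fun p hp => ?_
  refine (Finset.sum_le_sum fun p' hp' =>
    sum_balanced_mul_le p p' (hT p hp) (hT p' hp') (hno p hp p' hp')).trans ?_
  rw [← Finset.sum_filter, Finset.sum_const, nsmul_eq_mul]
  have hc : (T.filter fun p' =>
      p' ∈ Finset.univ.image (fun t : F => (p.1, p.1 + t • (p.2 - p.1)))).card
        ≤ Fintype.card F := by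
    refine (Finset.card_le_card (t := Finset.univ.image
      (fun t : F => (p.1, p.1 + t • (p.2 - p.1)))) ?_).trans Finset.card_image_le
    intro x hx
    exact (Finset.mem_filter.mp hx).2
  calc _ ≤ (Fintype.card F : ℤ) * (Fintype.card F : ℤ) ^ (d + 1) := by gcongr
    _ = _ := by ring

end

/-- Let `q` be a power of an odd prime and `d ≥ 2`. If `A, B ⊆ F_q^d` are
disjoint with `|A|² * |B| > 4 * q^(d+2)`, then there are `x, y ∈ A` and `z ∈ B` such that
`(x, y, z)` forms a right angle: `x, y, z` distinct and `(x−y)·(z−y) = 0`. -/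
theorem right_angle_two_sets
    (q d : ℕ) (hq : ∃ p n : ℕ, p.Prime ∧ Odd p ∧ 0 < n ∧ q = p ^ n) (hd : 2 ≤ d)
    (F : Type) [Field F] [Fintype F] (hcard : Fintype.card F = q)
    (A B : Finset (Fin d → F)) (hAB : Disjoint A B)
    (hsize : A.card ^ 2 * B.card > 4 * q ^ (d + 2)) :
    ∃ x ∈ A, ∃ y ∈ A, ∃ z ∈ B, x ≠ y ∧ y ≠ z ∧ x ≠ z ∧
      ∑ i, (x i - y i) * (z i - y i) = 0 := by
  classical
  by_contra! hcon
  have hne : ∀ y ∈ A, ∀ z ∈ B, y ≠ z := fun y hy z hz => by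
    rintro rfl; exact Finset.disjoint_left.mp hAB hy hz
  have hno : ∀ x ∈ A, ∀ y ∈ A, ∀ z ∈ B, x ⬝ᵥ (z - y) = y ⬝ᵥ (z - y) → x = y := by
    intro x hx y hy z hz h
    by_contra hxy
    refine hcon x hx y hy z hz hxy (hne y hy z hz) (hne x hx z hz) ?_
    have : (x - y) ⬝ᵥ (z - y) = 0 := by rw [sub_dotProduct, h, sub_self]
    simpa [dotProduct] using this
  have hmom := sum_sq_le (A ×ˢ B)
    (fun p hp => sub_ne_zero.mpr
      (hne p.1 (Finset.mem_product.mp hp).1 p.2 (Finset.mem_product.mp hp).2).symm)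
    (fun p hp p' hp' => hno p'.1 (Finset.mem_product.mp hp').1 p.1 (Finset.mem_product.mp hp).1
      p.2 (Finset.mem_product.mp hp).2)
  have hsum : ∑ x ∈ A, ∑ p ∈ A ×ˢ B, balanced p x
      = (q : ℤ) * (A.card * B.card) - A.card * (A.card * B.card) := by
    have : ∀ x ∈ A, ∑ p ∈ A ×ˢ B, balanced p x = (q : ℤ) * B.card - A.card * B.card := by
      intro x hx
      rw [Finset.sum_product]
      have h1 : ∀ y ∈ A, ∑ z ∈ B, balanced (y, z) x
          = (if x = y then (q : ℤ) * B.card else 0) - B.card := by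
        intro y hy
        have h2 : ∀ z ∈ B, balanced (y, z) x = (if x = y then (q : ℤ) else 0) - 1 := by
          intro z hz
          have : x ⬝ᵥ (z - y) = y ⬝ᵥ (z - y) ↔ x = y :=
            ⟨hno x hx y hy z hz, fun h => by rw [h]⟩
          simp only [balanced, this, hcard, mul_ite, mul_one, mul_zero]
        rw [Finset.sum_congr rfl h2, Finset.sum_const, nsmul_eq_mul]
        split_ifs <;> ring
      rw [Finset.sum_congr rfl h1, Finset.sum_sub_distrib, Finset.sum_ite_eq, if_pos hx]
      simp
    rw [Finset.sum_congr rfl this, Finset.sum_const, nsmul_eq_mul]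
    ring
  have hcs := sq_sum_le_card_mul_sum_sq (s := A) (f := fun x => ∑ p ∈ A ×ˢ B, balanced p x)
  have hsub : ∑ x ∈ A, (∑ p ∈ A ×ˢ B, balanced p x) ^ 2
      ≤ ∑ x, (∑ p ∈ A ×ˢ B, balanced p x) ^ 2 :=
    Finset.sum_le_sum_of_subset_of_nonneg (Finset.subset_univ A) fun _ _ _ => sq_nonneg _
  rw [hsum] at hcs
  rw [hcard, Finset.card_product] at hmom
  have hB : B.card ≤ q ^ d := by
    have := Finset.card_le_univ B
    simpa [hcard] using this
  have hApos : 0 < A.card := by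
    by_contra h
    have : A.card = 0 := by omega
    simp [this] at hsize
  have hBpos : 0 < B.card := by
    by_contra h
    have : B.card = 0 := by omega
    simp [this] at hsize
  have hqpos : 0 < q := hcard ▸ Fintype.card_pos
  have hA : 2 * q < A.card := by
    by_contra! h
    have h1 : A.card ^ 2 * B.card ≤ (2 * q) ^ 2 * q ^ d := by gcongr
    have h2 : (2 * q) ^ 2 * q ^ d = 4 * q ^ (d + 2) := by ring
    omega
  push_cast at hmom
  zify at hsize hApos hBpos hA
  generalize (A.card : ℤ) = a at *
  generalize (B.card : ℤ) = b at *
  have hfin : (a ^ 2 * b) * ((a - q) ^ 2 * b) ≤ (a ^ 2 * b) * (q : ℤ) ^ (d + 2) := by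
    calc (a ^ 2 * b) * ((a - q) ^ 2 * b) = (q * (a * b) - a * (a * b)) ^ 2 := by ring
      _ ≤ a * (a * b * (q : ℤ) ^ (d + 2)) :=
        hcs.trans (mul_le_mul_of_nonneg_left (hsub.trans hmom) hApos.le)
      _ = _ := by ring
  have hfin' := le_of_mul_le_mul_left hfin (by positivity)
  have h4 : a ^ 2 * b ≤ 4 * ((a - q) ^ 2 * b) := by
    have : a ^ 2 ≤ (2 * (a - q)) ^ 2 := by
      apply pow_le_pow_left₀ hApos.le; linarith
    nlinarith
  linarith
end

section
/- Let q be a power of an odd prime and d ≥ 2. If A ⊆ F_q^d satisfies |A| ≥ 4·q^{(d+2)/3} + 1 (as real numbers, with q^{(d+2)/3} the real (d+2)/3-th power of q), then A contains a right angle; that is, there exist distinct x, y, z ∈ A with (x−y)·(z−y) = 0. -/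
/-!
Suppose `A` has `n` points and no right angle. For `v ∈ F^d` and `t ∈ F` let `N(v, t)` be the
number of `x ∈ A` on the hyperplane `v·x = t`. The argument is a second moment estimate.

* On average over `t`, `N(v, t)` equals `n / q`, and since a nonzero linear form on `F^d` has
  `q^(d-1)` zeros, `∑_{v,t} (N(v, t) - n/q)² = n (q^d - q^(d-1))` (`sum_sq_deviation`, in the
  form of an upper bound).
* For distinct `y, z ∈ A`, the hyperplane through `y` normal to `z - y` contains no point of `A`
  other than `y` and possibly `z`, so `N(z - y, (z - y)·y) ≤ 2`. The map
  `(y, z) ↦ (z - y, (z - y)·y)` is therefore at most two-to-one on such pairs: `y` is one of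
  the at most two points of `A` on the hyperplane, and `z = y + v`. Hence at least `n(n-1)/2`
  pairs `(v, t)` satisfy `N(v, t) ≤ 2`, each contributing at least `(n/q - 2)²`.

Thus `(n - 1)(n/q - 2)² ≤ 2 q^d`. With `m = q^((d+2)/3) ≥ q` and `n ≥ 4m + 1`, the left side is at
least `4m (2m/q)² = 16 q^d`, a contradiction.
-/

open Finset in
/-- A nonzero linear form on `F^d` vanishes at a proportion `1/q` of the points. -/
lemma card_mul_card_dotProduct_eq_zero {F : Type} [Field F] [Fintype F] [DecidableEq F] {d : ℕ}
    (w : Fin d → F) (hw : w ≠ 0) :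
    Fintype.card F * #{v : Fin d → F | v ⬝ᵥ w = 0} = Fintype.card F ^ d := by
  obtain ⟨i, hi⟩ := Function.ne_iff.mp hw
  have hi : w i ≠ 0 := hi
  have hfib : ∀ t : F, #{v : Fin d → F | v ⬝ᵥ w = t} = #{v : Fin d → F | v ⬝ᵥ w = 0} := by
    intro t
    have hu : (Pi.single i (t / w i) : Fin d → F) ⬝ᵥ w = t := by
      rw [single_dotProduct]; field_simp
    refine card_bij' (fun v _ => v - Pi.single i (t / w i)) (fun v _ => v + Pi.single i (t / w i))
      ?_ ?_ ?_ ?_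
    · intro v hv
      simp only [mem_filter, mem_univ, true_and] at hv ⊢
      rw [sub_dotProduct, hu, hv, sub_self]
    · intro v hv
      simp only [mem_filter, mem_univ, true_and] at hv ⊢
      rw [add_dotProduct, hu, hv, zero_add]
    · simp
    · simp
  have h := card_eq_sum_card_fiberwise (s := (univ : Finset (Fin d → F))) (t := (univ : Finset F))
    (f := fun v => v ⬝ᵥ w) (by simp)
  simp only [hfib, sum_const, card_univ, smul_eq_mul] at h
  rw [← h]; simp

open Finset in
/-- Second moment bound for the number of points of `A` on the hyperplanes `v·x = t`, with the
degenerate normal `v = 0` included in the sum. -/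
lemma sum_sq_deviation {F : Type} [Field F] [Fintype F] [DecidableEq F] {d : ℕ}
    (A : Finset (Fin d → F)) :
    ∑ p : (Fin d → F) × F,
      ((#{x ∈ A | p.1 ⬝ᵥ x = p.2} : ℝ) - (#A : ℝ) / Fintype.card F) ^ 2
      ≤ (#A : ℝ) * (Fintype.card F : ℝ) ^ d := by
  set q : ℝ := (Fintype.card F : ℝ) with hq
  have hq0 : 0 < q := by rw [hq]; exact_mod_cast Fintype.card_pos
  set n : ℝ := (#A : ℝ) with hn
  have h1 : ∀ v : Fin d → F, ∑ t : F, (#{x ∈ A | v ⬝ᵥ x = t} : ℝ) = n := by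
    intro v
    rw [hn, card_eq_sum_card_fiberwise (s := A) (t := (univ : Finset F))
      (f := fun x => v ⬝ᵥ x) (by simp)]
    push_cast; rfl
  have h2 : ∀ v : Fin d → F, ∑ t : F, (#{x ∈ A | v ⬝ᵥ x = t} : ℝ) ^ 2
      = ∑ x ∈ A, ∑ y ∈ A, if v ⬝ᵥ (x - y) = 0 then (1 : ℝ) else 0 := by
    intro v
    simp only [card_filter, Nat.cast_sum, sq, sum_mul_sum]
    rw [sum_comm]
    refine sum_congr rfl fun x _ => ?_
    rw [sum_comm]
    refine sum_congr rfl fun y _ => ?_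
    simp [dotProduct_sub, sub_eq_zero, eq_comm]
  have h3 : ∀ x y : Fin d → F, (∑ v : Fin d → F, if v ⬝ᵥ (x - y) = 0 then (1 : ℝ) else 0)
      ≤ q ^ d / q + if x = y then q ^ d else 0 := by
    intro x y
    by_cases hxy : x = y
    · subst hxy
      simp only [sub_self, dotProduct_zero, if_true, sum_const, card_univ, nsmul_eq_mul, mul_one,
        Fintype.card_fun, Fintype.card_fin]
      push_cast
      rw [← hq]
      have : 0 < q ^ d / q := by positivity
      linarith
    · have h := card_mul_card_dotProduct_eq_zero (x - y) (sub_ne_zero.mpr hxy)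
      rw [← @Nat.cast_inj ℝ] at h
      push_cast at h
      rw [sum_boole, if_neg hxy, add_zero, le_div_iff₀ hq0, mul_comm]
      exact h.le
  have h4 : ∑ v : Fin d → F, ∑ t : F, (#{x ∈ A | v ⬝ᵥ x = t} : ℝ) ^ 2
      ≤ n * n * (q ^ d / q) + n * q ^ d := by
    simp only [h2]
    rw [sum_comm]
    calc _ = ∑ x ∈ A, ∑ y ∈ A, ∑ v : Fin d → F, (if v ⬝ᵥ (x - y) = 0 then (1 : ℝ) else 0) :=
          sum_congr rfl fun x _ => sum_comm
      _ ≤ ∑ x ∈ A, ∑ y ∈ A, (q ^ d / q + if x = y then q ^ d else 0) :=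
          sum_le_sum fun x _ => sum_le_sum fun y _ => h3 x y
      _ = _ := by
          simp only [sum_add_distrib, sum_const, nsmul_eq_mul, sum_ite_eq]
          rw [sum_ite_mem, inter_self, sum_const, nsmul_eq_mul]
          ring
  have h5 : ∀ v : Fin d → F, ∑ t : F, ((#{x ∈ A | v ⬝ᵥ x = t} : ℝ) - n / q) ^ 2
      = ∑ t : F, (#{x ∈ A | v ⬝ᵥ x = t} : ℝ) ^ 2 - n * n / q := by
    intro v
    simp only [sub_sq, sum_add_distrib, sum_sub_distrib, ← sum_mul, ← mul_sum, h1, sum_const,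
      card_univ, nsmul_eq_mul, ← hq]
    field_simp
    ring
  rw [Fintype.sum_prod_type]
  simp only [h5, sum_sub_distrib, sum_const, card_univ, nsmul_eq_mul, Fintype.card_fun,
    Fintype.card_fin]
  push_cast
  rw [← hq]
  have : q ^ d * (n * n / q) = n * n * (q ^ d / q) := by ring
  linarith

open Finset in
/-- If `A` has no right angle, then `(y, z) ↦ (z - y, (z - y)·y)` maps the ordered pairs of distinct
points of `A` at most two-to-one into the pairs `(v, t)` whose hyperplane `v·x = t` meets `A` in at
most two points. -/
lemma card_offDiag_le_of_no_right_angle {F : Type} [Field F] [Fintype F] [DecidableEq F] {d : ℕ}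
    (A : Finset (Fin d → F))
    (hA : ∀ x ∈ A, ∀ y ∈ A, ∀ z ∈ A, x ≠ y → y ≠ z → x ≠ z → (x - y) ⬝ᵥ (z - y) ≠ 0) :
    #A.offDiag ≤ 2 * #{p : (Fin d → F) × F | #{x ∈ A | p.1 ⬝ᵥ x = p.2} ≤ 2} := by
  refine card_le_mul_card_image_of_maps_to
    (f := fun p : (Fin d → F) × (Fin d → F) => (p.2 - p.1, (p.2 - p.1) ⬝ᵥ p.1)) ?_ 2 ?_
  · rintro ⟨y, z⟩ h
    obtain ⟨hy, hz, hyz⟩ := mem_offDiag.mp h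
    simp only [mem_filter, mem_univ, true_and]
    refine (card_le_card (t := {y, z}) fun x hx => ?_).trans card_le_two
    obtain ⟨hx, hxe⟩ := mem_filter.mp hx
    by_contra hne
    simp only [mem_insert, mem_singleton, not_or] at hne
    apply hA x hx y hy z hz hne.1 hyz hne.2
    rw [dotProduct_comm, dotProduct_sub, hxe, sub_self]
  · rintro ⟨v, t⟩ hp
    refine le_trans ?_ (mem_filter.mp hp).2
    refine card_le_card_of_injOn Prod.fst ?_ ?_
    · rintro ⟨y, z⟩ h
      simp only [coe_filter, Set.mem_ofPred_eq, mem_offDiag, Prod.mk.injEq] at h ⊢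
      obtain ⟨⟨hy, -, -⟩, rfl, rfl⟩ := h
      exact ⟨hy, rfl⟩
    · rintro ⟨y, z⟩ h ⟨y', z'⟩ h' (rfl : y = y')
      simp only [coe_filter, Set.mem_ofPred_eq, Prod.mk.injEq] at h h'
      have := h.2.1.trans h'.2.1.symm
      rw [sub_left_inj] at this
      rw [this]

/-- Let `q` be a power of an odd prime and `d ≥ 2`. If `A ⊆ F_q^d` satisfies
`|A| ≥ 4 * q^((d+2)/3) + 1` (as reals), then `A` contains a right angle: there are distinct
`x, y, z ∈ A` with `(x−y)·(z−y) = 0`. -/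
theorem right_angle_single_set
    (q d : ℕ) (hq : ∃ p n : ℕ, p.Prime ∧ Odd p ∧ 0 < n ∧ q = p ^ n) (hd : 2 ≤ d)
    (F : Type) [Field F] [Fintype F] (hcard : Fintype.card F = q)
    (A : Finset (Fin d → F))
    (hsize : (A.card : ℝ) ≥ 4 * (q : ℝ) ^ (((d : ℝ) + 2) / 3) + 1) :
    ∃ x ∈ A, ∃ y ∈ A, ∃ z ∈ A, x ≠ y ∧ y ≠ z ∧ x ≠ z ∧
      ∑ i, (x i - y i) * (z i - y i) = 0 := by
  classical
  by_contra hcon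
  have hA : ∀ x ∈ A, ∀ y ∈ A, ∀ z ∈ A, x ≠ y → y ≠ z → x ≠ z → (x - y) ⬝ᵥ (z - y) ≠ 0 :=
    fun x hx y hy z hz h1 h2 h3 h => hcon ⟨x, hx, y, hy, z, hz, h1, h2, h3, h⟩
  have hE := card_offDiag_le_of_no_right_angle A hA
  have hM := sum_sq_deviation A
  rw [hcard] at hM
  have hq1 : (1 : ℝ) ≤ q := by
    rw [← hcard]; exact_mod_cast Fintype.card_pos
  have hq0 : (0 : ℝ) < q := by linarith
  set m : ℝ := (q : ℝ) ^ (((d : ℝ) + 2) / 3) with hm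
  have hmq : (q : ℝ) ≤ m := by
    have hd' : (2 : ℝ) ≤ d := by exact_mod_cast hd
    calc (q : ℝ) = (q : ℝ) ^ (1 : ℝ) := (Real.rpow_one _).symm
      _ ≤ m := Real.rpow_le_rpow_of_exponent_le hq1 (by linarith)
  have hm3 : m ^ 3 = (q : ℝ) ^ d * (q : ℝ) ^ 2 := by
    rw [hm, ← Real.rpow_natCast, ← Real.rpow_mul hq0.le, ← pow_add, ← Real.rpow_natCast]
    congr 1
    push_cast
    ring
  set n : ℝ := (A.card : ℝ) with hn
  set S : Finset ((Fin d → F) × F) := {p | (A.filter fun x => p.1 ⬝ᵥ x = p.2).card ≤ 2} with hS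
  have hE' : n * n - n ≤ 2 * (S.card : ℝ) := by
    have h := Finset.offDiag_card A
    have h' : A.card * A.card ≤ 2 * S.card + A.card := by omega
    have h'' : n * n ≤ 2 * (S.card : ℝ) + n := by rw [hn]; exact_mod_cast h'
    linarith
  have hr : 2 * (m / q) ≤ n / q - 2 := by
    have : 2 * (m / q) + 2 = (2 * m + 2 * q) / q := by field_simp
    have h2 : (2 * m + 2 * q) / q ≤ n / q := by gcongr; linarith
    linarith
  have hmq0 : 0 < m / q := by
    have : 0 < m := by linarith
    positivity
  have hlow : (S.card : ℝ) * (2 * (m / q)) ^ 2 ≤ n * (q : ℝ) ^ d := by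
    refine le_trans ?_ hM
    refine le_trans ?_ (Finset.sum_le_sum_of_subset_of_nonneg (Finset.subset_univ S)
      fun _ _ _ => sq_nonneg _)
    rw [← nsmul_eq_mul]
    refine Finset.card_nsmul_le_sum _ _ _ fun p hp => ?_
    have h2 : ((A.filter fun x => p.1 ⬝ᵥ x = p.2).card : ℝ) ≤ 2 := by
      exact_mod_cast (Finset.mem_filter.mp hp).2
    rw [← neg_sq (_ - _)]
    exact pow_le_pow_left₀ (by positivity) (by linarith) 2
  have hn0 : 0 < n := by linarith
  have hQ : 0 < (q : ℝ) ^ d := by positivity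
  have hfin : n * (4 * m) * (2 * (m / q)) ^ 2 ≤ 2 * (n * (q : ℝ) ^ d) := by
    calc _ ≤ (2 * (S.card : ℝ)) * (2 * (m / q)) ^ 2 := by
          refine mul_le_mul_of_nonneg_right ?_ (sq_nonneg _)
          nlinarith
      _ ≤ _ := by linarith
  have hid : n * (4 * m) * (2 * (m / q)) ^ 2 = 16 * (n * (q : ℝ) ^ d) := by
    have : n * (4 * m) * (2 * (m / q)) ^ 2 = 16 * n * m ^ 3 / q ^ 2 := by
      field_simp
      ring
    rw [this, hm3]
    field_simp
  have : 0 < n * (q : ℝ) ^ d := by positivity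
  linarith
end

section
/- Let q be a power of an odd prime and suppose either d ≥ 3, or d = 2 and q ≡ 1 (mod 4). Then there exist disjoint sets A, B ⊆ F_q^d with |A| = q and |B| = q^d − q^{d−1} (so that |A|²·|B| = q^{d+2}(1 − 1/q)) such that no triple (x, y, z) with x, y ∈ A and z ∈ B forms a right angle; that is, for all x, y ∈ A and z ∈ B with x, y, z distinct, (x−y)·(z−y) ≠ 0. -/
/-!
The extremal configuration comes from an isotropic vector `v ≠ 0`, i.e. `v ⬝ᵥ v = 0`. Take for `A`
the line spanned by `v` and for `B` the complement of the hyperplane `v^⊥`. The line has `q` points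
and lies in `v^⊥`, so `A` and `B` are disjoint; and if `x = s v`, `y = t v` are distinct points of
`A`, then `(x - y) ⬝ᵥ (z - y) = (s - t) (v ⬝ᵥ z) ≠ 0` for every `z ∈ B`.

An isotropic vector exists for `d ≥ 3` because `-1` is a sum of two squares in any finite field,
and for `d = 2`, `q ≡ 1 (mod 4)` because `-1` is then a square.
-/

/-- A nonzero vector with zero dot product with itself, in the dimensions considered. -/
lemma exists_isotropic (d : ℕ) (F : Type) [Field F] [Fintype F]
    (hd : 3 ≤ d ∨ (d = 2 ∧ Fintype.card F % 4 = 1)) :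
    ∃ v : Fin d → F, v ≠ 0 ∧ ∑ i, v i * v i = 0 := by
  rcases hd with hd | ⟨rfl, hq⟩
  · obtain ⟨n, rfl⟩ := Nat.exists_eq_add_of_le' hd
    obtain ⟨p, hp⟩ := CharP.exists F
    have : NeZero p := ⟨(CharP.char_is_prime F p).ne_zero⟩
    obtain ⟨a, b, hab⟩ := CharP.sq_add_sq F p (-1)
    push_cast at hab
    refine ⟨Fin.cons 1 (Fin.cons a (Fin.cons b 0)), fun h => ?_, ?_⟩
    · simpa using congrFun h 0
    · simp only [Fin.sum_univ_succ, Fin.cons_zero, Fin.cons_succ, Pi.zero_apply, mul_zero,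
        Finset.sum_const_zero]
      linear_combination hab
  · obtain ⟨a, ha⟩ := FiniteField.isSquare_neg_one_iff.2 (show Fintype.card F % 4 ≠ 3 by omega)
    refine ⟨![1, a], fun h => ?_, ?_⟩
    · simpa using congrFun h 0
    · simp [Fin.sum_univ_two, ← ha]

/-- The complement of the hyperplane `v^⊥` has `q ^ d - q ^ (d - 1)` points. -/
lemma card_compl_hyperplane (d : ℕ) (F : Type) [Field F] [Fintype F] [DecidableEq F]
    (v : Fin d → F) (hv : v ≠ 0) :
    (Finset.univ.filter fun z : Fin d → F => ∑ i, v i * z i ≠ 0).card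
      = Fintype.card F ^ d - Fintype.card F ^ (d - 1) := by
  classical
  let f : (Fin d → F) →ₗ[F] F := ∑ i, v i • LinearMap.proj i
  have hf : ∀ z, f z = ∑ i, v i * z i := fun z => by simp [f]
  have hf0 : f ≠ 0 := by
    obtain ⟨i, hi⟩ := Function.ne_iff.1 hv
    intro h
    apply hi
    have := hf (Pi.single i 1)
    simpa [h, Pi.single_apply] using this.symm
  have hfin : Module.finrank F (LinearMap.ker f) = d - 1 := by
    have := Module.Dual.finrank_ker_add_one_of_ne_zero hf0
    rw [Module.finrank_fin_fun] at this
    omega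
  have hker : (Finset.univ.filter fun z : Fin d → F => ∑ i, v i * z i = 0).card
      = Fintype.card F ^ (d - 1) := by
    rw [← hfin, ← Module.card_eq_pow_finrank (K := F), ← Fintype.card_subtype]
    exact Fintype.card_congr (Equiv.subtypeEquivRight fun z => by rw [LinearMap.mem_ker, hf])
  have := Finset.card_filter_add_card_filter_not (s := (Finset.univ : Finset (Fin d → F)))
    (fun z => ∑ i, v i * z i = 0)
  rw [hker, Finset.card_univ, Fintype.card_fun, Fintype.card_fin] at this
  simp only [ne_eq]
  omega


/-- Let `q` be a power of an odd prime and suppose `d ≥ 3`, or `d = 2` and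
`q ≡ 1 (mod 4)`. Then there are disjoint `A, B ⊆ F_q^d` with `|A| = q` and
`|B| = q^d − q^(d−1)` such that no triple `(x, y, z)` with `x, y ∈ A`, `z ∈ B` forms a right
angle. -/
theorem right_angle_sharpness
    (q d : ℕ) (hq : ∃ p n : ℕ, p.Prime ∧ Odd p ∧ 0 < n ∧ q = p ^ n)
    (hd : 3 ≤ d ∨ (d = 2 ∧ q % 4 = 1))
    (F : Type) [Field F] [Fintype F] (hcard : Fintype.card F = q) :
    ∃ A B : Finset (Fin d → F), Disjoint A B ∧ A.card = q ∧ B.card = q ^ d - q ^ (d - 1) ∧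
      ∀ x ∈ A, ∀ y ∈ A, ∀ z ∈ B, x ≠ y → y ≠ z → x ≠ z →
        ∑ i, (x i - y i) * (z i - y i) ≠ 0 := by
  classical
  subst hcard
  obtain ⟨v, hv, hvv⟩ := exists_isotropic d F hd
  refine ⟨Finset.univ.image fun t : F => t • v,
    Finset.univ.filter fun z => ∑ i, v i * z i ≠ 0, ?_, ?_, card_compl_hyperplane d F v hv, ?_⟩
  · rw [Finset.disjoint_left]
    intro x hx hxB
    obtain ⟨t, -, rfl⟩ := Finset.mem_image.1 hx
    refine (Finset.mem_filter.1 hxB).2 ?_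
    calc ∑ i, v i * (t • v) i = t * ∑ i, v i * v i := by
          rw [Finset.mul_sum]
          exact Finset.sum_congr rfl fun i _ => by simp only [Pi.smul_apply, smul_eq_mul]; ring
      _ = 0 := by rw [hvv, mul_zero]
  · rw [Finset.card_image_of_injective _ (smul_left_injective F hv), Finset.card_univ]
  · intro x hx y hy z hz hxy _ _
    obtain ⟨s, -, rfl⟩ := Finset.mem_image.1 hx
    obtain ⟨t, -, rfl⟩ := Finset.mem_image.1 hy
    have hst : s - t ≠ 0 := fun h => hxy (by rw [sub_eq_zero.1 h])
    have key : ∑ i, ((s • v) i - (t • v) i) * (z i - (t • v) i)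
        = (s - t) * ∑ i, v i * z i - (s - t) * t * ∑ i, v i * v i := by
      rw [Finset.mul_sum, Finset.mul_sum, ← Finset.sum_sub_distrib]
      exact Finset.sum_congr rfl fun i _ => by simp only [Pi.smul_apply, smul_eq_mul]; ring
    rw [key, hvv, mul_zero, sub_zero]
    exact mul_ne_zero hst (Finset.mem_filter.1 hz).2
end

section
/- Let q be a power of an odd prime and d ≥ 1. If A ⊆ F_q^d satisfies |A| > q^{(d+2)/2} (as real numbers, with q^{(d+2)/2} the real (d+2)/2-th power of q), then there exist x, y ∈ A (not necessarily distinct) with x·y = 0. -/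
/-!
Second moment argument. Write `q = |F|` and put `G x = ∑_{y ∈ A} (q·[x·y = 0] - 1)`, an integer.
If no two elements of `A` are orthogonal, then `G x = -|A|` for every `x ∈ A`, hence
`∑_x G(x)² ≥ |A|³`. On the other hand `q·[c = 0] - 1 = ∑_{s ≠ 0} ψ(s c)` for a primitive additive
character `ψ` of `F`, so orthogonality of characters on `F^d` gives
`∑_x G(x)² = q^d · #{(s, s', y, y') : s, s' ≠ 0, y, y' ∈ A, s y + s' y' = 0}`. Since `s, s', y`
determine `y'`, this is at most `q^d (q - 1)² |A|`. Therefore `|A|² ≤ q^d (q - 1)² < q^(d+2)`.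
-/

open Finset in
/-- Orthogonality of additive characters on `F^d`. -/
lemma sum_char_dot {F : Type} [Field F] [Fintype F] [DecidableEq F] {d : ℕ}
    {ψ : AddChar F ℂ} (hψ : ψ.IsPrimitive) (v : Fin d → F) :
    ∑ x : Fin d → F, ψ (∑ i, x i * v i) = if v = 0 then (Fintype.card F : ℂ) ^ d else 0 := by
  have h : ∀ x : Fin d → F, ψ (∑ i, x i * v i) = ∏ i, ψ (x i * v i) := fun x =>
    map_prod ψ.toMonoidHom (fun i => Multiplicative.ofAdd (x i * v i)) univ
  simp_rw [h]
  rw [← Fintype.prod_sum (fun i a => ψ (a * v i))]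
  simp_rw [AddChar.sum_mulShift _ hψ]
  split_ifs with hv
  · simp [hv]
  · obtain ⟨i, hi⟩ := Function.ne_iff.mp hv
    exact prod_eq_zero (mem_univ i) (by simpa using hi)

open Finset in
lemma sum_char_ne_zero {F : Type} [Field F] [Fintype F] [DecidableEq F]
    {ψ : AddChar F ℂ} (hψ : ψ.IsPrimitive) (c : F) :
    ∑ s ∈ univ.erase (0 : F), ψ (s * c) = (if c = 0 then (Fintype.card F : ℂ) else 0) - 1 := by
  have h := AddChar.sum_mulShift c hψ
  rw [← add_sum_erase _ _ (mem_univ (0 : F))] at h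
  simp only [zero_mul, AddChar.map_zero_eq_one] at h
  rw [eq_sub_iff_add_eq', h]
  split_ifs <;> simp

open Finset in
/-- The second moment of `x ↦ ∑_{y ∈ A} (q·[x·y = 0] - 1)`, as a count of proportional pairs. -/
lemma second_moment_s5 {F : Type} [Field F] [Fintype F] [DecidableEq F] {d : ℕ}
    (A : Finset (Fin d → F)) :
    ∑ x : Fin d → F,
      (∑ y ∈ A, ((if ∑ i, x i * y i = 0 then (Fintype.card F : ℤ) else 0) - 1)) ^ 2 =
    ∑ s ∈ univ.erase (0 : F), ∑ s' ∈ univ.erase (0 : F), ∑ y ∈ A, ∑ y' ∈ A,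
      if s • y + s' • y' = 0 then (Fintype.card F : ℤ) ^ d else 0 := by
  obtain ⟨ψ, hψ⟩ : ∃ ψ : AddChar F ℂ, ψ.IsPrimitive :=
    ⟨_, AddChar.FiniteField.primitiveChar_to_Complex_isPrimitive F⟩
  have hG : ∀ x : Fin d → F,
      ((∑ y ∈ A, ((if ∑ i, x i * y i = 0 then (Fintype.card F : ℤ) else 0) - 1) : ℤ) : ℂ) =
      ∑ s ∈ univ.erase (0 : F), ∑ y ∈ A, ψ (s * ∑ i, x i * y i) := by
    intro x
    rw [sum_comm]
    push_cast
    exact sum_congr rfl fun y _ => (sum_char_ne_zero hψ _).symm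
  apply Int.cast_injective (α := ℂ)
  rw [Int.cast_sum]
  simp_rw [Int.cast_pow, hG, sq, sum_mul_sum, ← AddChar.map_add_eq_mul]
  push_cast
  simp_rw [← sum_char_dot hψ]
  rw [sum_comm]
  refine sum_congr rfl fun s _ => ?_
  rw [sum_comm]
  refine sum_congr rfl fun s' _ => ?_
  rw [sum_comm]
  refine sum_congr rfl fun y _ => ?_
  rw [sum_comm]
  refine sum_congr rfl fun y' _ => sum_congr rfl fun x _ => ?_
  congr 1
  simp only [Pi.add_apply, Pi.smul_apply, smul_eq_mul, mul_sum, ← sum_add_distrib]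
  exact sum_congr rfl fun i _ => by ring

open Finset in
lemma second_moment_le {F : Type} [Field F] [Fintype F] [DecidableEq F] {d : ℕ}
    (A : Finset (Fin d → F)) :
    ∑ x : Fin d → F,
      (∑ y ∈ A, ((if ∑ i, x i * y i = 0 then (Fintype.card F : ℤ) else 0) - 1)) ^ 2 ≤
    ((Fintype.card F : ℤ) - 1) ^ 2 * A.card * (Fintype.card F : ℤ) ^ d := by
  rw [second_moment_s5]
  have hc : (((univ.erase (0 : F)).card : ℕ) : ℤ) = (Fintype.card F : ℤ) - 1 := by
    rw [card_erase_of_mem (mem_univ _), card_univ, Nat.cast_sub Fintype.card_pos, Nat.cast_one]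
  calc _ ≤ ∑ s ∈ univ.erase (0 : F), ∑ s' ∈ univ.erase (0 : F), ∑ y ∈ A,
        (Fintype.card F : ℤ) ^ d := by
        refine sum_le_sum fun s _ => sum_le_sum fun s' hs' => sum_le_sum fun y _ => ?_
        have hs0 : s' ≠ 0 := ne_of_mem_erase hs'
        -- Only `y' = -s'⁻¹ s y` can contribute.
        have h : ∀ y' : Fin d → F, s • y + s' • y' = 0 → y' = -(s'⁻¹ • s • y) := by
          intro y' h
          rw [add_comm, add_eq_zero_iff_eq_neg] at h
          rw [← smul_neg, ← h, inv_smul_smul₀ hs0]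
        calc _ ≤ ∑ y' ∈ A, if y' = -(s'⁻¹ • s • y) then (Fintype.card F : ℤ) ^ d else 0 := by
              refine sum_le_sum fun y' _ => ?_
              by_cases h0 : s • y + s' • y' = 0
              · rw [if_pos h0, if_pos (h y' h0)]
              · rw [if_neg h0]
                split_ifs <;> positivity
          _ ≤ _ := by
              rw [sum_ite_eq']
              split_ifs
              · exact le_rfl
              · positivity
    _ = _ := by
        simp only [sum_const, nsmul_eq_mul, hc]
        ring

/-- Let `q` be a power of an odd prime and `d ≥ 1`. If `A ⊆ F_q^d` satisfies
`|A| > q^((d+2)/2)` (as reals), then there are `x, y ∈ A` (not necessarily distinct) with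
`x·y = 0`. -/
theorem zero_dot_product_exists
    (q d : ℕ) (hq : ∃ p n : ℕ, p.Prime ∧ Odd p ∧ 0 < n ∧ q = p ^ n) (hd : 1 ≤ d)
    (F : Type) [Field F] [Fintype F] (hcard : Fintype.card F = q)
    (A : Finset (Fin d → F))
    (hsize : (A.card : ℝ) > (q : ℝ) ^ (((d : ℝ) + 2) / 2)) :
    ∃ x ∈ A, ∃ y ∈ A, ∑ i, x i * y i = 0 := by
  classical
  by_contra! hA
  have hq1 : 1 ≤ q := hcard ▸ Fintype.card_pos
  have hsq : q ^ (d + 2) < A.card ^ 2 := by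
    have h0 : (0 : ℝ) ≤ (q : ℝ) ^ (((d : ℝ) + 2) / 2) := by positivity
    have h : ((q : ℝ) ^ (((d : ℝ) + 2) / 2)) ^ 2 = (q : ℝ) ^ (d + 2) := by
      rw [← Real.rpow_natCast, ← Real.rpow_mul (by positivity), ← Real.rpow_natCast]
      congr 1
      push_cast
      ring
    have h2 := pow_lt_pow_left₀ hsize h0 two_ne_zero
    rw [h] at h2
    exact_mod_cast h2
  have hpos : (0 : ℤ) < A.card := by
    have : A.card ≠ 0 := fun h => by simp [h] at hsq
    omega
  have hlow : (A.card : ℤ) * (A.card : ℤ) ^ 2 ≤ ∑ x : Fin d → F,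
      (∑ y ∈ A, ((if ∑ i, x i * y i = 0 then (Fintype.card F : ℤ) else 0) - 1)) ^ 2 := by
    calc (A.card : ℤ) * (A.card : ℤ) ^ 2 = ∑ x ∈ A,
          (∑ y ∈ A, ((if ∑ i, x i * y i = 0 then (Fintype.card F : ℤ) else 0) - 1)) ^ 2 := by
          rw [← nsmul_eq_mul, ← Finset.sum_const]
          refine Finset.sum_congr rfl fun x hx => ?_
          rw [Finset.sum_congr rfl fun y hy => by rw [if_neg (hA x hx y hy)]]
          simp
      _ ≤ _ := Finset.sum_le_sum_of_subset_of_nonneg (Finset.subset_univ _)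
          fun _ _ _ => sq_nonneg _
  have hup := hlow.trans (second_moment_le A)
  rw [hcard] at hup
  have h1 : (A.card : ℤ) ^ 2 ≤ ((q : ℤ) - 1) ^ 2 * (q : ℤ) ^ d :=
    le_of_mul_le_mul_left (by linarith) hpos
  have h2 : ((q : ℤ) - 1) ^ 2 * (q : ℤ) ^ d ≤ (q : ℤ) ^ 2 * (q : ℤ) ^ d := by
    have : (0 : ℤ) ≤ (q : ℤ) - 1 := by omega
    gcongr
    omega
  have h3 : (q : ℤ) ^ (d + 2) < (A.card : ℤ) ^ 2 := by exact_mod_cast hsq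
  rw [pow_add] at h3
  linarith
end

section
/- For every integer d ≥ 2 there exists N such that for every prime p > N there is a set B ⊆ F_p^d with |B| ≥ p^{(d+2)/2}/(5·d^{d/2}) (as real numbers) such that x·y ≠ 0 for all x, y ∈ B (including x = y). -/
/-!
The set `B` is the union of the punctured lines `F_p^* · a`, where `a` runs over the primitive
integer vectors in the box `[1, M]^d` with `M = ⌊√((p - 1) / d)⌋`. For two vectors `a, b` of the box,
`0 < a·b ≤ d M² < p`, so `a·b ≠ 0` in `F_p`, and the scalars do not affect non-vanishing.

The lines are distinct: if `l a = m b` in `F_p^d`, then `a i * b j ≡ a j * b i` modulo `p`. Both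
sides are below `p`, so they are equal integers, and primitivity forces `a = b`. Hence `B` has
`p - 1` elements for each primitive vector (`scaled_injOn`).

A non-primitive vector is divisible by some `q ≥ 2`, so at most `∑_{q ≥ 2} (M / q)^d ≤ (3/4) M^d`
vectors of the box are non-primitive (`card_primBox`). This gives `|B| ≥ (p - 1) M^d / 4`. With
`t = √(p / d)` one has `M ≥ t - 1`, and Bernoulli's inequality turns this into `|B| ≥ p t^d / 5` as
soon as `p > 100 d³`.
-/

/-- The primitive integer vectors (coordinates with greatest common divisor `1`) in the box
`[1, M]^d`. -/
def primBox (d M : ℕ) : Finset (Fin d → ℕ) :=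
  (Fintype.piFinset fun _ : Fin d => Finset.Icc 1 M).filter
    fun a => Finset.univ.gcd a = 1

lemma mem_primBox {d M : ℕ} {a : Fin d → ℕ} :
    a ∈ primBox d M ↔ (∀ i, 1 ≤ a i ∧ a i ≤ M) ∧ Finset.univ.gcd a = 1 := by
  simp [primBox, Fintype.mem_piFinset]

/-- A telescoping bound by `1/4 + ∑_{q ≥ 3} 1 / (q (q - 1))`. -/
lemma sum_inv_sq_le (M : ℕ) : ∑ q ∈ Finset.Icc 2 M, (1 : ℝ) / (q : ℝ) ^ 2 ≤ 3 / 4 := by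
  have key : ∀ n : ℕ, ∑ q ∈ Finset.Icc 2 (n + 2), (1 : ℝ) / (q : ℝ) ^ 2
      ≤ 3 / 4 - 1 / ((n : ℝ) + 2) := by
    intro n
    induction n with
    | zero => norm_num
    | succ n ih =>
      rw [show n + 1 + 2 = (n + 2) + 1 by ring, Finset.sum_Icc_succ_top (by omega)]
      have h : (1 : ℝ) / ((n : ℝ) + 3) ^ 2 ≤ 1 / ((n : ℝ) + 2) - 1 / ((n : ℝ) + 3) := by
        rw [div_sub_div _ _ (by positivity) (by positivity),
          div_le_div_iff₀ (by positivity) (by positivity)]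
        have : (0 : ℝ) ≤ n := n.cast_nonneg
        nlinarith
      have e1 : ((n + 2 + 1 : ℕ) : ℝ) = n + 3 := by push_cast; ring
      have e2 : ((n + 1 : ℕ) : ℝ) + 2 = n + 3 := by push_cast; ring
      rw [e1, e2]
      linarith
  rcases Nat.lt_or_ge M 2 with h | h
  · rw [Finset.Icc_eq_empty (by omega)]
    norm_num
  · obtain ⟨n, rfl⟩ := Nat.exists_eq_add_of_le' h
    have : (0 : ℝ) ≤ 1 / ((n : ℝ) + 2) := by positivity
    linarith [key n]

lemma card_primBox (d M : ℕ) (hd : 2 ≤ d) : (M : ℝ) ^ d / 4 ≤ ((primBox d M).card : ℝ) := by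
  set P : Finset (Fin d → ℕ) := Fintype.piFinset fun _ : Fin d => Finset.Icc 1 M with hP
  have hPc : P.card = M ^ d := by simp [hP, Fintype.card_piFinset]
  have hsplit : (primBox d M).card + (P.filter fun a => ¬ Finset.univ.gcd a = 1).card = M ^ d := by
    rw [← hPc]
    exact Finset.card_filter_add_card_filter_not _
  have hsub : (P.filter fun a => ¬ Finset.univ.gcd a = 1) ⊆
      (Finset.Icc 2 M).biUnion fun q =>
        Fintype.piFinset fun _ : Fin d => (Finset.Ioc 0 M).filter (q ∣ ·) := by
    intro a ha
    rw [Finset.mem_filter, hP, Fintype.mem_piFinset] at ha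
    obtain ⟨ha, hg⟩ := ha
    simp only [Finset.mem_Icc] at ha
    have hdvd : ∀ i, Finset.univ.gcd a ∣ a i := fun i => Finset.gcd_dvd (Finset.mem_univ i)
    let i₀ : Fin d := ⟨0, by omega⟩
    have h1 := Nat.le_of_dvd (ha i₀).1 (hdvd i₀)
    have h0 := Nat.pos_of_dvd_of_pos (hdvd i₀) (ha i₀).1
    have h2 := (ha i₀).2
    simp only [Finset.mem_biUnion, Fintype.mem_piFinset, Finset.mem_filter, Finset.mem_Ioc,
      Finset.mem_Icc]
    exact ⟨Finset.univ.gcd a, ⟨by omega, by omega⟩,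
      fun i => ⟨⟨(ha i).1, (ha i).2⟩, hdvd i⟩⟩
  have hbad : ((P.filter fun a => ¬ Finset.univ.gcd a = 1).card : ℝ) ≤ (M : ℝ) ^ d * (3 / 4) := by
    have h1 : (P.filter fun a => ¬ Finset.univ.gcd a = 1).card ≤
        ∑ q ∈ Finset.Icc 2 M, (M / q) ^ d := by
      refine (Finset.card_le_card hsub).trans (Finset.card_biUnion_le.trans (le_of_eq ?_))
      refine Finset.sum_congr rfl fun q _ => ?_
      simp [Fintype.card_piFinset, Nat.Ioc_filter_dvd_card_eq_div]
    calc ((P.filter fun a => ¬ Finset.univ.gcd a = 1).card : ℝ)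
        ≤ ((∑ q ∈ Finset.Icc 2 M, (M / q) ^ d : ℕ) : ℝ) := by exact_mod_cast h1
      _ = ∑ q ∈ Finset.Icc 2 M, ((M / q : ℕ) : ℝ) ^ d := by push_cast; rfl
      _ ≤ ∑ q ∈ Finset.Icc 2 M, (M : ℝ) ^ d * (1 / (q : ℝ) ^ 2) := by
        refine Finset.sum_le_sum fun q hq => ?_
        have hq2 : 2 ≤ q := (Finset.mem_Icc.mp hq).1
        have hq1 : (1 : ℝ) ≤ q := by exact_mod_cast (by omega : 1 ≤ q)
        calc ((M / q : ℕ) : ℝ) ^ d ≤ ((M : ℝ) / q) ^ d := by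
              gcongr
              exact Nat.cast_div_le
          _ = (M : ℝ) ^ d * (1 / (q : ℝ) ^ d) := by rw [div_pow]; ring
          _ ≤ (M : ℝ) ^ d * (1 / (q : ℝ) ^ 2) := by gcongr
      _ = (M : ℝ) ^ d * ∑ q ∈ Finset.Icc 2 M, (1 : ℝ) / (q : ℝ) ^ 2 := by
        rw [Finset.mul_sum]
      _ ≤ (M : ℝ) ^ d * (3 / 4) := by gcongr; exact sum_inv_sq_le M
  have hs : ((primBox d M).card : ℝ) +
      ((P.filter fun a => ¬ Finset.univ.gcd a = 1).card : ℝ) = (M : ℝ) ^ d := by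
    exact_mod_cast hsplit
  linarith

/-- Two primitive vectors that are proportional, in the sense that all `2 × 2` minors vanish, are
equal. -/
lemma eq_of_proportional {d : ℕ} {a b : Fin d → ℕ} (ha : Finset.univ.gcd a = 1)
    (hb : Finset.univ.gcd b = 1) (h : ∀ i j, a i * b j = a j * b i) : a = b := by
  funext j
  have h1 : Finset.univ.gcd (fun i => b j * a i) = Finset.univ.gcd (fun i => a j * b i) := by
    congr 1
    funext i
    rw [mul_comm, h]
  rw [Finset.gcd_mul_left, Finset.gcd_mul_left] at h1
  have ha' : (Finset.univ.gcd fun i => a i) = 1 := ha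
  have hb' : (Finset.univ.gcd fun i => b i) = 1 := hb
  rw [ha', hb'] at h1
  simpa using h1.symm

/-- Distinct pairs of a nonzero scalar and a primitive vector of the box give distinct vectors
over `F_p`. -/
lemma scaled_injOn {d p M : ℕ} [Fact p.Prime] (hd : 2 ≤ d) (hM : d * M ^ 2 < p) :
    Set.InjOn (fun x : (ZMod p)ˣ × (Fin d → ℕ) => fun i => (x.1 : ZMod p) * (x.2 i : ZMod p))
      ((Finset.univ ×ˢ primBox d M : Finset ((ZMod p)ˣ × (Fin d → ℕ))) :
        Set ((ZMod p)ˣ × (Fin d → ℕ))) := by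
  rintro ⟨l, a⟩ ha ⟨m, b⟩ hb hab
  simp only [Finset.coe_product, Set.mem_prod, Finset.mem_coe, mem_primBox] at ha hb
  obtain ⟨-, ha, hag⟩ := ha
  obtain ⟨-, hb, hbg⟩ := hb
  have hab : ∀ i, (l : ZMod p) * (a i : ZMod p) = (m : ZMod p) * (b i : ZMod p) :=
    fun i => congrFun hab i
  have hlt : ∀ x y : ℕ, x ≤ M → y ≤ M → x * y < p := by
    intro x y hx hy
    have := Nat.mul_le_mul hx hy
    nlinarith
  have heq : a = b := by
    refine eq_of_proportional hag hbg fun i j => ?_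
    have hz : ((a i * b j : ℕ) : ZMod p) = ((a j * b i : ℕ) : ZMod p) := by
      push_cast
      apply (l * m).isUnit.mul_left_cancel
      push_cast
      linear_combination (m : ZMod p) * (b j : ZMod p) * hab i -
        (m : ZMod p) * (b i : ZMod p) * hab j
    rw [ZMod.natCast_eq_natCast_iff] at hz
    exact Nat.ModEq.eq_of_lt_of_lt hz (hlt _ _ (ha i).2 (hb j).2) (hlt _ _ (ha j).2 (hb i).2)
  subst heq
  let i₀ : Fin d := ⟨0, by omega⟩
  have hne : (a i₀ : ZMod p) ≠ 0 := by
    rw [Ne, ZMod.natCast_eq_zero_iff]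
    intro hdv
    have h1 := Nat.le_of_dvd (ha i₀).1 hdv
    have h2 := hlt (a i₀) (a i₀) (ha i₀).2 (ha i₀).2
    have h3 := (ha i₀).1
    nlinarith
  have hlm : l = m := Units.ext (mul_right_cancel₀ hne (hab i₀))
  rw [hlm]

/-- The numerical comparison between `(p - 1) M^d / 4` and `p t^d / 5`, where `t = √(p / d)`. -/
lemma size_bound {d p M : ℕ} (hd : 2 ≤ d) (hp : 100 * d ^ 3 < p) (hM : p ≤ d * (M + 1) ^ 2) :
    (p : ℝ) ^ (((d : ℝ) + 2) / 2) / (5 * (d : ℝ) ^ ((d : ℝ) / 2)) ≤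
      ((p : ℝ) - 1) * ((M : ℝ) ^ d / 4) := by
  have hd0 : (2 : ℝ) ≤ d := by exact_mod_cast hd
  have hpR : 100 * (d : ℝ) ^ 3 < p := by exact_mod_cast hp
  have hMR : (p : ℝ) ≤ d * ((M : ℝ) + 1) ^ 2 := by exact_mod_cast hM
  have hp10 : (10 : ℝ) ≤ p := by
    have : (1 : ℝ) ≤ (d : ℝ) ^ 3 := one_le_pow₀ (by linarith)
    linarith
  have hp0 : (0 : ℝ) < p := by linarith
  set t : ℝ := √((p : ℝ) / d) with ht
  have htM : t ≤ M + 1 := by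
    refine Real.sqrt_le_iff.mpr ⟨by positivity, ?_⟩
    rw [div_le_iff₀ (by linarith)]
    linarith
  have ht10 : 10 * (d : ℝ) ≤ t := by
    refine Real.le_sqrt_of_sq_le ?_
    rw [le_div_iff₀ (by linarith)]
    nlinarith
  have ht0 : 0 < t := by linarith
  have hLHS : (p : ℝ) ^ (((d : ℝ) + 2) / 2) / (5 * (d : ℝ) ^ ((d : ℝ) / 2)) = p * t ^ d / 5 := by
    have e : t ^ d = (p : ℝ) ^ ((d : ℝ) / 2) / (d : ℝ) ^ ((d : ℝ) / 2) := by
      rw [ht, Real.sqrt_eq_rpow, ← Real.rpow_natCast, ← Real.rpow_mul (by positivity),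
        ← Real.div_rpow (by positivity) (by positivity)]
      congr 1
      ring
    rw [e, show ((d : ℝ) + 2) / 2 = (d : ℝ) / 2 + 1 by ring, Real.rpow_add hp0, Real.rpow_one]
    ring
  rw [hLHS]
  have hbern : 9 / 10 ≤ (1 - 1 / t) ^ d := by
    have h1t : 1 / t ≤ 1 := by rw [div_le_one ht0]; linarith
    have h := one_add_mul_le_pow (a := -(1 / t)) (by linarith) d
    have h2 : (d : ℝ) * (1 / t) ≤ 1 / 10 := by
      rw [mul_one_div, div_le_iff₀ ht0]
      linarith
    rw [← sub_eq_add_neg] at h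
    linarith
  have hMd : 9 / 10 * t ^ d ≤ (M : ℝ) ^ d := by
    calc 9 / 10 * t ^ d ≤ (1 - 1 / t) ^ d * t ^ d := by gcongr
      _ = (t - 1) ^ d := by
        rw [← mul_pow]
        congr 1
        field_simp
      _ ≤ (M : ℝ) ^ d := pow_le_pow_left₀ (by linarith) (by linarith) d
  have htd : 0 < t ^ d := by positivity
  calc p * t ^ d / 5 ≤ (9 / 10 * p) * ((9 / 10 * t ^ d) / 4) := by nlinarith [mul_pos hp0 htd]
    _ ≤ ((p : ℝ) - 1) * ((M : ℝ) ^ d / 4) := by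
      gcongr
      · linarith
      · linarith

/-- For every integer `d ≥ 2` there exists `N` such that for every prime
`p > N` there is a set `B ⊆ F_p^d` with `|B| ≥ p^((d+2)/2) / (5 * d^(d/2))` (as reals) such
that `x·y ≠ 0` for all `x, y ∈ B` (including `x = y`). -/
theorem nonzero_dot_product_large_set (d : ℕ) (hd : 2 ≤ d) :
    ∃ N : ℕ, ∀ p : ℕ, p.Prime → p > N →
      ∃ B : Finset (Fin d → ZMod p),
        (B.card : ℝ) ≥ (p : ℝ) ^ (((d : ℝ) + 2) / 2) / (5 * (d : ℝ) ^ ((d : ℝ) / 2)) ∧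
        ∀ x ∈ B, ∀ y ∈ B, ∑ i, x i * y i ≠ 0 := by
  classical
  refine ⟨100 * d ^ 3, fun p hp hpN => ?_⟩
  haveI : Fact p.Prime := ⟨hp⟩
  set M := Nat.sqrt ((p - 1) / d) with hMdef
  have hlow : d * M ^ 2 < p := by
    have h1 : M ^ 2 ≤ (p - 1) / d := Nat.sqrt_le' _
    have h2 := (Nat.mul_le_mul_left d h1).trans (Nat.mul_div_le (p - 1) d)
    have := hp.pos
    omega
  have hhigh : p ≤ d * (M + 1) ^ 2 := by
    have h1 : (p - 1) / d < (M + 1) ^ 2 := Nat.lt_succ_sqrt' _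
    have h2 := (Nat.div_lt_iff_lt_mul (by omega : 0 < d)).mp h1
    rw [mul_comm] at h2
    omega
  refine ⟨(Finset.univ ×ˢ primBox d M).image
    (fun x : (ZMod p)ˣ × (Fin d → ℕ) => fun i => (x.1 : ZMod p) * (x.2 i : ZMod p)), ?_, ?_⟩
  · rw [Finset.card_image_of_injOn (scaled_injOn hd hlow), Finset.card_product, Finset.card_univ,
      ZMod.card_units_eq_totient, Nat.totient_prime hp, Nat.cast_mul, Nat.cast_pred hp.pos]
    refine (size_bound hd hpN hhigh).trans ?_
    have : (1 : ℝ) ≤ p := by exact_mod_cast hp.pos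
    exact mul_le_mul_of_nonneg_left (card_primBox d M hd) (by linarith)
  · intro x hx y hy
    simp only [Finset.mem_image, Finset.mem_product, Finset.mem_univ, true_and, Prod.exists,
      mem_primBox] at hx hy
    obtain ⟨l, a, ⟨ha, -⟩, rfl⟩ := hx
    obtain ⟨m, b, ⟨hb, -⟩, rfl⟩ := hy
    have hsum : ∑ i, (l : ZMod p) * (a i : ZMod p) * ((m : ZMod p) * (b i : ZMod p)) =
        ((l * m : (ZMod p)ˣ) : ZMod p) * ((∑ i, a i * b i : ℕ) : ZMod p) := by
      push_cast
      rw [Finset.mul_sum]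
      exact Finset.sum_congr rfl fun i _ => by ring
    rw [hsum]
    refine mul_ne_zero (Units.ne_zero _) ?_
    rw [Ne, ZMod.natCast_eq_zero_iff]
    have hpos : 0 < ∑ i, a i * b i :=
      Finset.sum_pos (fun i _ => Nat.mul_pos (ha i).1 (hb i).1) ⟨⟨0, by omega⟩, Finset.mem_univ _⟩
    have hle : ∑ i, a i * b i ≤ d * M ^ 2 := by
      calc ∑ i, a i * b i ≤ ∑ _i : Fin d, M ^ 2 :=
            Finset.sum_le_sum fun i _ => by
              rw [sq]
              exact Nat.mul_le_mul (ha i).2 (hb i).2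
        _ = d * M ^ 2 := by simp
    exact Nat.not_dvd_of_pos_of_lt hpos (hle.trans_lt hlow)
end

section
/- Let φ denote Euler's totient function. Then ∑_{i=1}^n i·φ(i) = (1 − o(1))·(2/π²)·n³ as n → ∞; equivalently, the limit as n → ∞ of (∑_{i=1}^n i·φ(i))/n³ equals 2/π². -/
open Filter

/-!
By Möbius inversion of `∑_{d ∣ n} φ(d) = n`, the function `i ↦ i * φ(i)` is the Dirichlet convolution
of `d ↦ d * μ(d)` and `e ↦ e ^ 2`. Hence
`∑_{i ≤ n} i * φ(i) = ∑_d d * μ(d) * S(⌊n / d⌋)` with `S(m) = 1 ^ 2 + ⋯ + m ^ 2`. After division by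
`n ^ 3`, the `d`-th term tends to `μ(d) / (3 * d ^ 2)`, because `S(m) / m ^ 3 → 1 / 3`, and it is at
most `1 / d ^ 2` in absolute value, because `S(m) ≤ m ^ 3`. By dominated convergence for series the
limit is `(1 / 3) * ∑_d μ(d) / d ^ 2 = 1 / (3 * ζ(2)) = 2 / π ^ 2`.
-/

namespace TotientSum

open ArithmeticFunction

/-- The arithmetic function `d ↦ d * μ(d)`. -/
noncomputable def idMulMoebius : ArithmeticFunction ℝ :=
  ⟨fun d => (d : ℝ) * (moebius d : ℝ), by simp⟩

/-- The arithmetic function `e ↦ e ^ 2`. -/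
noncomputable def square : ArithmeticFunction ℝ :=
  ⟨fun e => (e : ℝ) ^ 2, by simp⟩

/-- The sum of squares `1 ^ 2 + ⋯ + m ^ 2`. -/
noncomputable def sumSq (m : ℕ) : ℝ := ∑ e ∈ Finset.Ioc 0 m, square e

/-- Möbius inversion of `∑_{d ∣ n} φ(d) = n`, multiplied by `n = d * e`. -/
theorem idMulMoebius_mul_square {n : ℕ} (hn : 0 < n) :
    (idMulMoebius * square) n = (n : ℝ) * Nat.totient n := by
  have h := (sum_eq_iff_sum_mul_moebius_eq (R := ℝ) (f := fun n => (Nat.totient n : ℝ))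
    (g := fun n => (n : ℝ))).1 (fun n _ => by exact_mod_cast Nat.sum_totient n) n hn
  rw [mul_apply, ← h, Finset.mul_sum]
  refine Finset.sum_congr rfl fun x hx => ?_
  have hx' : (n : ℝ) = x.1 * x.2 := by
    exact_mod_cast (Nat.mem_divisorsAntidiagonal.1 hx).1.symm
  simp only [idMulMoebius, square, coe_mk, hx']
  ring

theorem sumSq_eq (m : ℕ) : sumSq m = (m : ℝ) * (m + 1) * (2 * m + 1) / 6 := by
  unfold sumSq
  induction m with
  | zero => simp
  | succ k ih =>
    rw [Finset.sum_Ioc_succ_top (Nat.zero_le k), ih]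
    simp only [square, coe_mk]
    push_cast
    ring

theorem sumSq_nonneg (m : ℕ) : 0 ≤ sumSq m := by
  rw [sumSq_eq]; positivity

theorem sumSq_le (m : ℕ) : sumSq m ≤ (m : ℝ) ^ 3 := by
  rw [sumSq_eq]
  rcases Nat.eq_zero_or_pos m with rfl | hm
  · simp
  · have h1 : (1 : ℝ) ≤ m := by exact_mod_cast hm
    nlinarith [mul_nonneg (sub_nonneg.2 h1) (sub_nonneg.2 h1),
      mul_nonneg (mul_nonneg (sub_nonneg.2 h1) (sub_nonneg.2 h1)) (sub_nonneg.2 h1)]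

theorem abs_moebius_le (d : ℕ) : |(moebius d : ℝ)| ≤ 1 := by
  exact_mod_cast abs_moebius_le_one (n := d)

/-- The terms with `d = 0` and `d > n` vanish, so the finite sum can be written as a series over
all `d`. -/
theorem sum_eq_tsum (n : ℕ) :
    (∑ i ∈ Finset.Icc 1 n, (i : ℝ) * Nat.totient i) / (n : ℝ) ^ 3 =
      ∑' d : ℕ, (d : ℝ) * moebius d * sumSq (n / d) / (n : ℝ) ^ 3 := by
  have h1 : ∑ i ∈ Finset.Icc 1 n, (i : ℝ) * Nat.totient i =
      ∑ i ∈ Finset.Ioc 0 n, (idMulMoebius * square) i := by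
    refine Finset.sum_congr (by ext; simp; omega) fun i hi => ?_
    exact (idMulMoebius_mul_square (Finset.mem_Ioc.1 hi).1).symm
  rw [h1, sum_Ioc_mul_eq_sum_sum, Finset.sum_div]
  refine (tsum_eq_sum fun d hd => ?_).symm
  rcases Nat.eq_zero_or_pos d with rfl | hd0
  · simp
  · have : n < d := by simp at hd; omega
    simp [Nat.div_eq_of_lt this]

/-- The summable majorant for dominated convergence; at `d = 0` both sides are `0`. -/
theorem norm_term_le (n d : ℕ) :
    ‖(d : ℝ) * moebius d * sumSq (n / d) / (n : ℝ) ^ 3‖ ≤ 1 / (d : ℝ) ^ 2 := by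
  rcases Nat.eq_zero_or_pos d with rfl | hd
  · simp
  rcases Nat.eq_zero_or_pos n with rfl | hn
  · simp
  have hd' : (0 : ℝ) < d := by exact_mod_cast hd
  have hn' : (0 : ℝ) < n := by exact_mod_cast hn
  have hS : sumSq (n / d) ≤ ((n : ℝ) / d) ^ 3 :=
    (sumSq_le _).trans (pow_le_pow_left₀ (Nat.cast_nonneg _) Nat.cast_div_le 3)
  rw [Real.norm_eq_abs, abs_div, abs_mul, abs_mul, abs_of_nonneg (sumSq_nonneg _),
    abs_of_pos hd', abs_of_pos (pow_pos hn' 3)]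
  calc (d : ℝ) * |(moebius d : ℝ)| * sumSq (n / d) / (n : ℝ) ^ 3
      ≤ d * 1 * ((n : ℝ) / d) ^ 3 / (n : ℝ) ^ 3 := by
        gcongr
        · exact sumSq_nonneg _
        · exact abs_moebius_le d
    _ = 1 / (d : ℝ) ^ 2 := by field_simp

theorem tendsto_term (d : ℕ) :
    Tendsto (fun n : ℕ => (d : ℝ) * moebius d * sumSq (n / d) / (n : ℝ) ^ 3) atTop
      (nhds (moebius d / (d : ℝ) ^ 2 * (1 / 3))) := by
  rcases Nat.eq_zero_or_pos d with rfl | hd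
  · simp
  have hd' : (d : ℝ) ≠ 0 := by exact_mod_cast hd.ne'
  have hq : Tendsto (fun n : ℕ => ((n / d : ℕ) : ℝ) / (n : ℝ)) atTop (nhds (1 / d)) := by
    have h := (tendsto_nat_floor_mul_div_atTop (R := ℝ) (a := 1 / d) (by positivity)).comp
      tendsto_natCast_atTop_atTop
    refine h.congr fun n => ?_
    simp only [Function.comp]
    rw [one_div_mul_eq_div, Nat.floor_div_eq_div]
  have hz : Tendsto (fun n : ℕ => (1 : ℝ) / n) atTop (nhds 0) := tendsto_one_div_atTop_nhds_zero_nat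
  have key := ((hq.mul (hq.add hz)).mul ((hq.const_mul 2).add hz)).const_mul
    ((d : ℝ) * moebius d / 6)
  have hlim : (d : ℝ) * moebius d / 6 * (1 / d * (1 / d + 0) * (2 * (1 / d) + 0)) =
      moebius d / (d : ℝ) ^ 2 * (1 / 3) := by
    field_simp
    ring
  rw [hlim] at key
  refine key.congr' ?_
  filter_upwards [eventually_gt_atTop 0] with n hn
  have hn' : (n : ℝ) ≠ 0 := by exact_mod_cast hn.ne'
  rw [sumSq_eq]
  field_simp

/-- `∑_d μ(d) / d ^ 2 = 1 / ζ(2) = 6 / π ^ 2`. -/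
theorem tsum_moebius_div_sq :
    ∑' d : ℕ, (moebius d : ℝ) / (d : ℝ) ^ 2 = 6 / Real.pi ^ 2 := by
  have h2 : (1 : ℝ) < (2 : ℂ).re := by norm_num
  have h := LSeries_zeta_mul_Lseries_moebius h2
  rw [LSeries_zeta_eq_riemannZeta h2, riemannZeta_two] at h
  have hL : LSeries (fun n => ((moebius n : ℤ) : ℂ)) 2 =
      ((∑' d : ℕ, (moebius d : ℝ) / (d : ℝ) ^ 2 : ℝ) : ℂ) := by
    rw [Complex.ofReal_tsum]
    refine tsum_congr fun d => ?_
    rw [LSeries.term_of_ne_zero' two_ne_zero]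
    push_cast
    norm_cast
  rw [hL] at h
  have h' : Real.pi ^ 2 / 6 * ∑' d : ℕ, (moebius d : ℝ) / (d : ℝ) ^ 2 = 1 := by
    exact_mod_cast h
  have hpi := Real.pi_ne_zero
  field_simp at h' ⊢
  linarith

end TotientSum

/-- `∑_{i=1}^n i·φ(i) = (1 − o(1))·(2/π²)·n³` as `n → ∞`; equivalently,
`(∑_{i=1}^n i·φ(i)) / n³ → 2/π²`. -/
theorem sum_totient_mul_id_asymptotic :
    Tendsto (fun n : ℕ => (∑ i ∈ Finset.Icc 1 n, (i : ℝ) * Nat.totient i) / (n : ℝ) ^ 3)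
      atTop (nhds (2 / Real.pi ^ 2)) := by
  have hlim : 2 / Real.pi ^ 2 =
      ∑' d : ℕ, (ArithmeticFunction.moebius d : ℝ) / (d : ℝ) ^ 2 * (1 / 3) := by
    rw [tsum_mul_right, TotientSum.tsum_moebius_div_sq]
    ring
  simp_rw [TotientSum.sum_eq_tsum, hlim]
  exact tendsto_tsum_of_dominated_convergence
    (Real.summable_one_div_nat_pow.2 one_lt_two) TotientSum.tendsto_term
    (Eventually.of_forall TotientSum.norm_term_le)
end

section
/- Let q be a power of an odd prime. There exists a set A ⊆ F_q² with |A| = q such that the only spread generated by A is 0: for all distinct a, b, c ∈ A with ‖a−b‖·‖c−b‖ ≠ 0, one has ((a−b)·(c−b))² = ‖a−b‖·‖c−b‖ (i.e., the spread of the triple (a, b, c) equals 0). -/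
/-- Let `q` be a power of an odd prime. There exists `A ⊆ F_q²` with
`|A| = q` such that the only spread generated by `A` is `0`: for all distinct `a, b, c ∈ A`
with `‖a−b‖·‖c−b‖ ≠ 0`, one has `((a−b)·(c−b))² = ‖a−b‖·‖c−b‖`. -/
theorem line_generates_only_zero_spread
    (q : ℕ) (hq : ∃ p n : ℕ, p.Prime ∧ Odd p ∧ 0 < n ∧ q = p ^ n)
    (F : Type) [Field F] [Fintype F] (hcard : Fintype.card F = q) :
    ∃ A : Finset (Fin 2 → F), A.card = q ∧
      ∀ a ∈ A, ∀ b ∈ A, ∀ c ∈ A, a ≠ b → b ≠ c → a ≠ c →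
        (∑ i, (a i - b i) * (a i - b i)) * (∑ i, (c i - b i) * (c i - b i)) ≠ 0 →
        (∑ i, (a i - b i) * (c i - b i)) ^ 2 =
          (∑ i, (a i - b i) * (a i - b i)) * (∑ i, (c i - b i) * (c i - b i)) := by
  classical
  -- The horizontal axis: `t ↦ (t, 0)` is injective, and all difference vectors are parallel.
  have hinj : Function.Injective (fun t : F => (![t, 0] : Fin 2 → F)) := fun s t h => by
    simpa using congrFun h 0
  refine ⟨Finset.univ.image (fun t : F => (![t, 0] : Fin 2 → F)), ?_, ?_⟩
  · rw [Finset.card_image_of_injective _ hinj, Finset.card_univ, hcard]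
  · intro a ha b hb c hc _ _ _ _
    simp only [Finset.mem_image, Finset.mem_univ, true_and] at ha hb hc
    obtain ⟨x, rfl⟩ := ha
    obtain ⟨y, rfl⟩ := hb
    obtain ⟨z, rfl⟩ := hc
    simp [Fin.sum_univ_two]
    ring
end

section
/- Let q be a power of an odd prime and let d ≥ 2 be even. If E ⊆ F_q^d satisfies |E| > (q^d − 1)/(q − 1), then E contains three distinct collinear points: there exist distinct x, y, z ∈ E and t ∈ F_q with z − x = t·(y − x). -/
/-!
Suppose `E` has no collinear triple and let `N = (q ^ d - 1) / (q - 1)`, the number of points of the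
projective space `ℙ F (F ^ d)` of directions. For each `x ∈ E`, the map sending `y ∈ E \ {x}` to the
direction of `y - x` is injective (`exists_collinear_of_direction_subset`), so `|E| ≤ N + 1`. As
`|E| > N`, equality holds and each of these maps is a bijection: for a fixed direction `v`, every
`x ∈ E` has exactly one partner `y ∈ E \ {x}` with `y - x` parallel to `v`. Partnership is a
fixed-point-free involution of `E`, so `|E| = N + 1` is even. But `N = 1 + q + ⋯ + q ^ (d - 1)` is
a sum of an even number of odd terms, a contradiction.
-/

open scoped LinearAlgebra.Projectivization

/-- Pigeonhole on the directions of the lines joining a point `x` to the other points of `E`: if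
those directions all lie in a set `S` with fewer than `|E| - 1` elements, two of the lines coincide,
and `E` contains three distinct collinear points. -/
theorem exists_collinear_of_direction_subset {F V : Type*} [Field F] [AddCommGroup V] [Module F V]
    (E : Finset V) (S : Finset (ℙ F V)) (x : V) (hx : x ∈ E) (hcard : S.card + 1 < E.card)
    (hS : ∀ y ∈ E, ∀ h : y - x ≠ 0, Projectivization.mk F (y - x) h ∈ S) :
    ∃ x ∈ E, ∃ y ∈ E, ∃ z ∈ E, x ≠ y ∧ y ≠ z ∧ x ≠ z ∧ ∃ t : F, z - x = t • (y - x) := by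
  classical
  have hne : ∀ y : {y // y ∈ E.erase x}, (y : V) - x ≠ 0 := fun y =>
    sub_ne_zero.2 (Finset.ne_of_mem_erase y.2)
  obtain ⟨y, -, z, -, hyz, h⟩ := Finset.exists_ne_map_eq_of_card_lt_of_maps_to
    (s := (E.erase x).attach) (t := S)
    (f := fun y => Projectivization.mk F ((y : V) - x) (hne y))
    (by rw [Finset.card_attach, Finset.card_erase_of_mem hx]; omega)
    (fun y _ => hS y (Finset.mem_of_mem_erase y.2) (hne y))
  obtain ⟨a, ha⟩ := (Projectivization.mk_eq_mk_iff' F _ _ _ _).1 h.symm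
  exact ⟨x, hx, y, Finset.mem_of_mem_erase y.2, z, Finset.mem_of_mem_erase z.2,
    (Finset.ne_of_mem_erase y.2).symm, fun e => hyz (Subtype.ext e),
    (Finset.ne_of_mem_erase z.2).symm, a, ha.symm⟩

/-- Let `q` be a power of an odd prime and `d ≥ 2` even. If `E ⊆ F_q^d`
satisfies `|E| > (q^d − 1)/(q − 1)`, then `E` contains three distinct collinear points. -/
theorem collinear_triple_of_large_set_even_dim
    (q d : ℕ) (hq : ∃ p n : ℕ, p.Prime ∧ Odd p ∧ 0 < n ∧ q = p ^ n)
    (hd : 2 ≤ d) (hdeven : Even d)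
    (F : Type) [Field F] [Fintype F] (hcard : Fintype.card F = q)
    (E : Finset (Fin d → F)) (hE : (q ^ d - 1) / (q - 1) < E.card) :
    ∃ x ∈ E, ∃ y ∈ E, ∃ z ∈ E, x ≠ y ∧ y ≠ z ∧ x ≠ z ∧
      ∃ t : F, z - x = t • (y - x) := by
  classical
  by_contra hcon
  have hq2 : 2 ≤ q := hcard ▸ Fintype.one_lt_card
  have hqodd : Odd q := by
    obtain ⟨p, n, -, hp, -, rfl⟩ := hq
    exact hp.pow
  let _ : Fintype (ℙ F (Fin d → F)) := Fintype.ofFinite _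
  have hN : (Finset.univ : Finset (ℙ F (Fin d → F))).card = ∑ i ∈ Finset.range d, q ^ i := by
    rw [Finset.card_univ, ← Nat.card_eq_fintype_card,
      Projectivization.card_of_finrank F (Fin d → F) (n := d) (by simp), Nat.card_eq_fintype_card,
      hcard]
  rw [← Nat.geomSum_eq hq2, ← hN] at hE
  have hNeven : Even (Finset.univ : Finset (ℙ F (Fin d → F))).card := by
    rw [hN, Finset.even_sum_iff_even_card_odd]
    simpa [hqodd.pow] using hdeven
  obtain ⟨x₀, hx₀⟩ : E.Nonempty := Finset.card_pos.1 (by omega)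
  have hEcard : E.card = (Finset.univ : Finset (ℙ F (Fin d → F))).card + 1 := by
    by_contra hne
    exact hcon (exists_collinear_of_direction_subset E Finset.univ x₀ hx₀ (by omega) (by simp))
  obtain ⟨v, hv⟩ : ∃ v : Fin d → F, v ≠ 0 :=
    ⟨fun _ => 1, fun h => one_ne_zero (congrFun h ⟨0, by omega⟩)⟩
  have hpartner : ∀ x ∈ E, ∃ y ∈ E, y ≠ x ∧ ∃ c : F, c • v = y - x := by
    intro x hx
    by_contra hno
    -- Otherwise the direction of `v` is missed at `x`, leaving one direction too few.
    refine hcon (exists_collinear_of_direction_subset E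
      (Finset.univ.erase (Projectivization.mk F v hv)) x hx ?_ ?_)
    · have := Finset.card_erase_lt_of_mem (Finset.mem_univ (Projectivization.mk F v hv))
      omega
    · intro y hy h
      refine Finset.mem_erase.2 ⟨fun he => hno ⟨y, hy, sub_ne_zero.1 h, ?_⟩, Finset.mem_univ _⟩
      exact (Projectivization.mk_eq_mk_iff' F _ _ _ _).1 he
  choose! g hgE hgne c hc using hpartner
  have hginv : ∀ x ∈ E, g (g x) = x := by
    intro x hx
    by_contra hne
    -- If `g (g x) ≠ x`, the points `g x`, `x`, `g (g x)` are a collinear triple.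
    have hcx : c x ≠ 0 := fun h0 => by
      have := hc x hx
      rw [h0, zero_smul] at this
      exact hgne x hx (sub_eq_zero.1 this.symm)
    refine hcon ⟨g x, hgE x hx, x, hx, g (g x), hgE _ (hgE x hx), hgne x hx, Ne.symm hne,
      (hgne _ (hgE x hx)).symm, -(c (g x) / c x), ?_⟩
    rw [← hc _ (hgE x hx), ← neg_sub (g x) x, ← hc x hx, smul_neg, neg_smul, neg_neg, smul_smul,
      div_mul_cancel₀ _ hcx]
  have hEeven : Even E.card := by
    rw [← ZMod.natCast_eq_zero_iff_even]
    have : ∑ x ∈ E, (1 : ZMod 2) = 0 :=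
      Finset.sum_involution (fun x _ => g x) (fun _ _ => by decide) (fun x hx _ => hgne x hx)
        (fun x hx => hgE x hx) (fun x hx => hginv x hx)
    simpa using this
  rw [hEcard] at hEeven
  exact (Nat.even_add_one.1 hEeven) hNeven
end

section
/- Let q be a power of an odd prime and let t ∈ F_q be a nonsquare (t is not of the form s² for any s ∈ F_q). Then the paraboloid P = {(x, y, t·x² − y²) : x, y ∈ F_q} ⊆ F_q³ contains no three distinct collinear points: for all distinct a, b, c ∈ P, c − a is not a scalar multiple of b − a. -/
/-!
Write `Q(x, y) = t x² - y²`. Restricted to a line with direction `d`, the graph condition for `Q`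
is a quadratic equation in the parameter with leading coefficient `Q(d)`. If the parameters `0`,
`1` and `r` all solve it, then `r (r - 1) Q(d) = 0`; the points being distinct excludes `r = 0`
and `r = 1`, so `Q(d) = 0`. Since `t` is a nonsquare, `Q` is anisotropic, whence `d = 0`,
contradicting the distinctness of the first two points.
-/

/-- The form `t u² - v²` is anisotropic when `t` is a nonsquare. -/
lemma eq_zero_of_mul_sq_eq_sq {F : Type} [Field F] {t : F} (ht : ∀ s : F, s ^ 2 ≠ t)
    {u v : F} (h : t * u ^ 2 = v ^ 2) : u = 0 ∧ v = 0 := by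
  have hu : u = 0 := by
    by_contra hu
    apply ht (v / u)
    rw [div_pow, ← h]
    field_simp
  subst hu
  refine ⟨rfl, ?_⟩
  simpa using h.symm

/-- Let `q` be a power of an odd prime and `t ∈ F_q` a nonsquare. Then the
paraboloid `P = {(x, y, t·x² − y²) : x, y ∈ F_q} ⊆ F_q³` contains no three distinct
collinear points. -/
theorem paraboloid_no_collinear_triples
    (q : ℕ) (hq : ∃ p n : ℕ, p.Prime ∧ Odd p ∧ 0 < n ∧ q = p ^ n)
    (F : Type) [Field F] [Fintype F] (hcard : Fintype.card F = q)
    (t : F) (ht : ∀ s : F, s ^ 2 ≠ t)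
    (a b c : F × F × F)
    (ha : a ∈ {p : F × F × F | ∃ x y : F, p = (x, y, t * x ^ 2 - y ^ 2)})
    (hb : b ∈ {p : F × F × F | ∃ x y : F, p = (x, y, t * x ^ 2 - y ^ 2)})
    (hc : c ∈ {p : F × F × F | ∃ x y : F, p = (x, y, t * x ^ 2 - y ^ 2)})
    (hab : a ≠ b) (hbc : b ≠ c) (hac : a ≠ c) :
    ∀ r : F, c - a ≠ r • (b - a) := by
  obtain ⟨x₁, y₁, rfl⟩ := ha
  obtain ⟨x₂, y₂, rfl⟩ := hb
  obtain ⟨x₃, y₃, rfl⟩ := hc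
  intro r h
  have hr0 : r ≠ 0 := by
    rintro rfl
    rw [zero_smul, sub_eq_zero] at h
    exact hac h.symm
  have hr1 : r - 1 ≠ 0 := by
    intro hr
    rw [sub_eq_zero.mp hr, one_smul] at h
    exact hbc (sub_left_injective h).symm
  simp only [Prod.mk_sub_mk, Prod.smul_mk, smul_eq_mul, Prod.mk.injEq] at h
  obtain ⟨hx, hy, hz⟩ := h
  obtain rfl : x₃ = x₁ + r * (x₂ - x₁) := by linear_combination hx
  obtain rfl : y₃ = y₁ + r * (y₂ - y₁) := by linear_combination hy
  have hQ : r * ((r - 1) * (t * (x₂ - x₁) ^ 2 - (y₂ - y₁) ^ 2)) = 0 := by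
    linear_combination hz
  have hd : t * (x₂ - x₁) ^ 2 = (y₂ - y₁) ^ 2 := by
    simpa [hr0, hr1, sub_eq_zero] using hQ
  obtain ⟨hu, hv⟩ := eq_zero_of_mul_sq_eq_sq ht hd
  apply hab
  rw [sub_eq_zero.mp hu, sub_eq_zero.mp hv]
end

section
/- Let q be a power of an odd prime and let d ≥ 1. Then there exists a set P ⊆ F_q^d with |P| = q^{⌊2d/3⌋} such that P contains no three distinct collinear points: for all distinct a, b, c ∈ P, c − a is not a scalar multiple of b − a. -/
/-!
Write `q = |F|`. In dimension 2 the parabola `y = x²` has `q` points and meets no line three times;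
in dimension 3 the elliptic paraboloid `z = x² - n y²`, with `n` a non-square (which exists because
`q` is odd), has `q²` points and meets no line three times: a third collinear point would force
`(r² - r) Q(h) = 0` with `r ≠ 0, 1` and `h ≠ 0`, where `Q` is the anisotropic form in question.
Products of sets without collinear triples again have none (`IsCap.prod`), because the two
projections of a collinear triple share the same ratio `r`. Starting from dimensions 0, 1, 2 with
`1, 1, q` points, each multiplication by the paraboloid raises the dimension by 3 and the
exponent of `q` by 2.
-/

/-- `P` is a cap: whenever `c = a + r (b - a)` with `a, b, c ∈ P` and `r ≠ 0, 1`, one has `a = b`.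
This is equivalent to the absence of three distinct collinear points, and unlike a condition on
distinct triples it passes directly to products. -/
def IsCap (F : Type) [Field F] {V : Type} [AddCommGroup V] [Module F V] (P : Finset V) : Prop :=
  ∀ a ∈ P, ∀ b ∈ P, ∀ c ∈ P, ∀ r : F, r ≠ 0 → r ≠ 1 → c - a = r • (b - a) → a = b

lemma IsCap.prod {F V W : Type} [Field F] [AddCommGroup V] [Module F V] [AddCommGroup W]
    [Module F W] {P : Finset V} {Q : Finset W} (hP : IsCap F P) (hQ : IsCap F Q) :
    IsCap F (P ×ˢ Q) := by
  intro a ha b hb c hc r h0 h1 h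
  rw [Finset.mem_product] at ha hb hc
  exact Prod.ext
    (hP _ ha.1 _ hb.1 _ hc.1 r h0 h1 (by simpa using congrArg Prod.fst h))
    (hQ _ ha.2 _ hb.2 _ hc.2 r h0 h1 (by simpa using congrArg Prod.snd h))

lemma IsCap.map {F V W : Type} [Field F] [AddCommGroup V] [Module F V] [AddCommGroup W]
    [Module F W] {P : Finset V} (hP : IsCap F P) (e : V ≃ₗ[F] W) :
    IsCap F (P.map e.toEquiv.toEmbedding) := by
  intro a ha b hb c hc r h0 h1 h
  simp only [Finset.mem_map] at ha hb hc
  obtain ⟨a, ha, rfl⟩ := ha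
  obtain ⟨b, hb, rfl⟩ := hb
  obtain ⟨c, hc, rfl⟩ := hc
  have h' : e (c - a) = e (r • (b - a)) := by simpa using h
  rw [hP a ha b hb c hc r h0 h1 (e.injective h')]

lemma exists_isCap_add {F : Type} [Field F] {m n k l : ℕ}
    (h₁ : ∃ P : Finset (Fin m → F), P.card = k ∧ IsCap F P)
    (h₂ : ∃ P : Finset (Fin n → F), P.card = l ∧ IsCap F P) :
    ∃ P : Finset (Fin (m + n) → F), P.card = k * l ∧ IsCap F P := by
  obtain ⟨P, rfl, hP⟩ := h₁
  obtain ⟨Q, rfl, hQ⟩ := h₂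
  exact ⟨_, by rw [Finset.card_map, Finset.card_product],
    (hP.prod hQ).map ((LinearEquiv.sumArrowLequivProdArrow (Fin m) (Fin n) F F).symm.trans
      (LinearEquiv.funCongrLeft F F finSumFinEquiv.symm))⟩

lemma exists_isCap_one {F : Type} [Field F] (d : ℕ) :
    ∃ P : Finset (Fin d → F), P.card = 1 ∧ IsCap F P := by
  refine ⟨{0}, by simp, ?_⟩
  intro a ha b hb c hc r h0 h1 h
  rw [Finset.mem_singleton] at ha hb
  rw [ha, hb]

/-- The parabola is a cap in the plane. -/
lemma exists_isCap_parabola {F : Type} [Field F] [Fintype F] :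
    ∃ P : Finset (Fin 2 → F), P.card = Fintype.card F ∧ IsCap F P := by
  classical
  refine ⟨Finset.univ.image (fun x : F => ![x, x ^ 2]), ?_, ?_⟩
  · rw [Finset.card_image_of_injective, Finset.card_univ]
    intro x y h
    exact congrFun h 0
  · intro a ha b hb c hc r h0 h1 h
    simp only [Finset.mem_image, Finset.mem_univ, true_and] at ha hb hc
    obtain ⟨a, rfl⟩ := ha
    obtain ⟨b, rfl⟩ := hb
    obtain ⟨c, rfl⟩ := hc
    have e0 : c - a = r * (b - a) := by simpa using congrFun h 0
    have e1 : c ^ 2 - a ^ 2 = r * (b ^ 2 - a ^ 2) := by simpa using congrFun h 1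
    obtain rfl : c = a + r * (b - a) := by linear_combination e0
    have key : r * (r - 1) * (b - a) ^ 2 = 0 := by linear_combination e1
    have hba : b - a = 0 := by simpa [h0, sub_ne_zero.2 h1] using key
    rw [sub_eq_zero.1 hba]

/-- The elliptic paraboloid is a cap in three-space. -/
lemma exists_isCap_paraboloid {F : Type} [Field F] [Fintype F] (hF : ringChar F ≠ 2) :
    ∃ P : Finset (Fin 3 → F), P.card = Fintype.card F ^ 2 ∧ IsCap F P := by
  classical
  obtain ⟨n, hn⟩ := FiniteField.exists_nonsquare hF
  -- The form `x² - n y²` is anisotropic because `n` is not a square.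
  have aniso : ∀ x y : F, x ^ 2 - n * y ^ 2 = 0 → x = 0 ∧ y = 0 := by
    intro x y h
    have hy : y = 0 := by
      by_contra hy
      refine hn ⟨x / y, ?_⟩
      field_simp
      linear_combination -h
    subst hy
    simpa using h
  refine ⟨Finset.univ.image (fun p : F × F => ![p.1, p.2, p.1 ^ 2 - n * p.2 ^ 2]), ?_, ?_⟩
  · rw [Finset.card_image_of_injective, Finset.card_univ, Fintype.card_prod, sq]
    intro x y h
    exact Prod.ext (congrFun h 0) (congrFun h 1)
  · intro a ha b hb c hc r h0 h1 h
    simp only [Finset.mem_image, Finset.mem_univ, true_and] at ha hb hc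
    obtain ⟨⟨a, a'⟩, rfl⟩ := ha
    obtain ⟨⟨b, b'⟩, rfl⟩ := hb
    obtain ⟨⟨c, c'⟩, rfl⟩ := hc
    have e0 : c - a = r * (b - a) := by simpa using congrFun h 0
    have e1 : c' - a' = r * (b' - a') := by simpa using congrFun h 1
    have e2 : (c ^ 2 - n * c' ^ 2) - (a ^ 2 - n * a' ^ 2) =
        r * ((b ^ 2 - n * b' ^ 2) - (a ^ 2 - n * a' ^ 2)) := by simpa using congrFun h 2
    obtain rfl : c = a + r * (b - a) := by linear_combination e0
    obtain rfl : c' = a' + r * (b' - a') := by linear_combination e1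
    have key : r * (r - 1) * ((b - a) ^ 2 - n * (b' - a') ^ 2) = 0 := by linear_combination e2
    have hQ := (mul_eq_zero.1 key).resolve_left (mul_ne_zero h0 (sub_ne_zero.2 h1))
    obtain ⟨h2, h3⟩ := aniso _ _ hQ
    rw [sub_eq_zero.1 h2, sub_eq_zero.1 h3]

lemma exists_isCap {F : Type} [Field F] [Fintype F] (hF : ringChar F ≠ 2) :
    ∀ d : ℕ, ∃ P : Finset (Fin d → F), P.card = Fintype.card F ^ (2 * d / 3) ∧ IsCap F P
  | 0 => by simpa using exists_isCap_one 0
  | 1 => by simpa using exists_isCap_one 1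
  | 2 => by simpa using exists_isCap_parabola
  | d + 3 => by
    have h := exists_isCap_add (exists_isCap hF d) (exists_isCap_paraboloid hF)
    rwa [← pow_add, show 2 * d / 3 + 2 = 2 * (d + 3) / 3 by omega] at h

/-- Let `q` be a power of an odd prime and `d ≥ 1`. Then there exists
`P ⊆ F_q^d` with `|P| = q^⌊2d/3⌋` containing no three distinct collinear points. -/
theorem large_set_no_collinear_triples
    (q d : ℕ) (hq : ∃ p n : ℕ, p.Prime ∧ Odd p ∧ 0 < n ∧ q = p ^ n) (hd : 1 ≤ d)
    (F : Type) [Field F] [Fintype F] (hcard : Fintype.card F = q) :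
    ∃ P : Finset (Fin d → F), P.card = q ^ (2 * d / 3) ∧
      ∀ a ∈ P, ∀ b ∈ P, ∀ c ∈ P, a ≠ b → b ≠ c → a ≠ c →
        ∀ r : F, c - a ≠ r • (b - a) := by
  have hF : ringChar F ≠ 2 := by
    intro h
    obtain ⟨p, n, -, hp, -, rfl⟩ := hq
    have h2 := FiniteField.even_card_iff_char_two.1 h
    rw [hcard] at h2
    have h3 := Nat.odd_iff.1 (hp.pow (n := n))
    omega
  obtain ⟨P, hP, hcap⟩ := exists_isCap hF d
  refine ⟨P, by rw [hP, hcard], ?_⟩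
  intro a ha b hb c hc hab hbc hac r h
  refine hab (hcap a ha b hb c hc r ?_ ?_ h)
  · rintro rfl
    rw [zero_smul, sub_eq_zero] at h
    exact hac h.symm
  · rintro rfl
    rw [one_smul, sub_left_inj] at h
    exact hbc h.symm
end
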